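/- arXiv:2209.00986 — 4 statements merged into one kernel-verified Lean document; each statement's English description precedes it below -/
import Mathlib

section
/- Let G be a finite group with tp(G) > (1/2)^8. Then G is supersoluble or G has a section isomorphic to the alternating group A_4, i.e. there exist subgroups N ⊴ H ≤ G with H/N ≅ A_4. -/
/-!
The proof is an induction on `|G|`. Counting common transversals shows `tp G ≤ tp (G ⧸ M)` for every
normal `M`, and both conclusions lift from `G ⧸ ⟨x⟩` to `G` when `⟨x⟩` is normal. So one may assume
that no nontrivial cyclic subgroup of `G` is normal.

Let `H = ⟨x⟩` have prime order `p`, with normaliser `N`. Every double coset of `H` outside `N` has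
`p ^ 2` elements, and a common transversal meets it in the graph of a permutation of `H`. If there are
`k` such double cosets, then `|G| = |N| + k p ^ 2` and `tp G ≤ (p! / p ^ p) ^ k`
(`card_eq_card_normalizer_add`, `transProb_le`). With `tp G > 1 / 2 ^ 8` and `k ≥ 1` this forces
`p ≤ 7` and `k ≤ 7, 3, 1, 1` for `p = 2, 3, 5, 7`. Since `p ∣ |N| ∣ |G|`, for `p = 3, 5, 7` the
pair `(|G|, |N|)` lies in a short list.

Combining the constraints for all primes dividing `|G|`, and using that `|G|` is not a prime power
(`p`-groups have nontrivial centre), short arguments with centralisers of involutions exclude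
every order but 12 and 24 (`not_card_18`, `not_card_36`, and the cases `7 ∣ |G|` and `5 ∣ |G|` of
`section_of_no_cyclic_normal`). In the two remaining cases `G` acts faithfully on the four conjugates
of a subgroup of order 3 (`section_of_card_12_24`), so it is a subgroup of `S₄` containing `A₄`.
-/

open scoped Pointwise Classical

/-- `T` is simultaneously a left transversal for `H` (each left coset `gH` contains exactly one
element of `T`) and a right transversal for `K` (each right coset `Kg` contains exactly one
element of `T`). -/
def IsDoubleTransversal {G : Type*} [Group G] (H K : Subgroup G) (T : Set G) : Prop :=
  (∀ g : G, ∃! t : G, t ∈ T ∧ g⁻¹ * t ∈ H) ∧ (∀ g : G, ∃! t : G, t ∈ T ∧ t * g⁻¹ ∈ K)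

/-- `|DT_G(H,K)|`: the number of common transversals for the pair `(H, K)`. -/
noncomputable def numDT {G : Type*} [Group G] (H K : Subgroup G) : ℕ :=
  Nat.card {T : Set G // IsDoubleTransversal H K T}

/-- `P_G(H,K) = |DT_G(H,K)| / |H| ^ (G:H)`, the common transversal probability. -/
noncomputable def transProb {G : Type*} [Group G] (H K : Subgroup G) : ℚ :=
  (numDT H K : ℚ) / (Nat.card H : ℚ) ^ H.index

/-- `tp(G)`: the minimum of `P_G(H) = P_G(H,H)` over all subgroups `H ≤ G`. -/
noncomputable def tp (G : Type*) [Group G] [Finite G] : ℚ :=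
  haveI : Finite (Subgroup G) :=
    Finite.of_injective (fun H : Subgroup G => (H : Set G)) SetLike.coe_injective
  haveI : Fintype (Subgroup G) := Fintype.ofFinite _
  Finset.univ.inf' Finset.univ_nonempty (fun H : Subgroup G => transProb H H)

/-- `G` has a section isomorphic to `X`: there are subgroups `N ⊴ H ≤ G` with `H/N ≅ X`,
equivalently (as formalized here) some subgroup of `G` admits a surjective homomorphism
onto `X`. -/
def HasSectionIsomorphicTo (G : Type*) [Group G] (X : Type*) [Group X] : Prop :=
  ∃ (H : Subgroup G) (φ : H →* X), Function.Surjective φ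

/-- `G` is supersoluble: there is a chain `⊥ = c 0 ≤ c 1 ≤ ⋯ ≤ c n = ⊤` of subgroups, all
normal in `G`, such that each successive quotient `c (i+1) / c i` is cyclic (expressed here
as: `c (i+1)` is contained in the join of `c i` with a single generator). -/
def IsSupersoluble (G : Type*) [Group G] : Prop :=
  ∃ (n : ℕ) (c : Fin (n + 1) → Subgroup G),
    c 0 = ⊥ ∧ c (Fin.last n) = ⊤ ∧ Monotone c ∧ (∀ i, (c i).Normal) ∧
      ∀ i : Fin n, ∃ x : G, c i.succ ≤ Subgroup.closure {x} ⊔ c i.castSucc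

/-! ### Common transversals of a subgroup of prime order -/

section Counting

open scoped Nat

variable {G : Type*} [Group G]

lemma tp_le_transProb [Finite G] (H : Subgroup G) : tp G ≤ transProb H H := by
  unfold tp
  exact Finset.inf'_le (fun H : Subgroup G => transProb H H) (by simp)

lemma conj_mem_of_mem_normalizer {H : Subgroup G} {r a : G}
    (hr : r ∈ Subgroup.normalizer (H : Set G)) (ha : a ∈ H) : r * a * r⁻¹ ∈ H :=
  (Subgroup.mem_normalizer_iff.1 hr a).1 ha

/-- For `|H|` prime, `H ∩ r⁻¹Hr ≠ 1` already forces `r` to normalise `H`. -/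
lemma mem_normalizer_of_conj_mem [Finite G] {H : Subgroup G} (hp : (Nat.card H).Prime) {r a : G}
    (ha : a ∈ H) (ha1 : a ≠ 1) (h : r * a * r⁻¹ ∈ H) :
    r ∈ Subgroup.normalizer (H : Set G) := by
  have : Fact (Nat.card H).Prime := ⟨hp⟩
  have key : ∀ b ∈ H, r * b * r⁻¹ ∈ H := by
    intro b hb
    have hz : (⟨b, hb⟩ : H) ∈ Subgroup.zpowers (⟨a, ha⟩ : H) :=
      mem_zpowers_of_prime_card rfl (by simpa [Subtype.ext_iff] using ha1)
    obtain ⟨n, hn⟩ := Subgroup.mem_zpowers_iff.1 hz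
    have hn' : a ^ n = b := by simpa [Subtype.ext_iff] using hn
    rw [← hn', ← conj_zpow]
    exact H.zpow_mem h n
  rw [Subgroup.mem_normalizer_iff_map_conj_eq]
  refine Subgroup.eq_of_le_of_card_ge ?_ ?_
  · rintro _ ⟨b, hb, rfl⟩
    simpa using key b hb
  · rw [Subgroup.card_map_of_injective (MulAut.conj r).injective]

/-- The double cosets of `H` lying outside its normaliser. When `|H|` is prime these are the double
cosets on which `H × H` acts regularly, with base point `Quotient.out`. -/
abbrev FreeDoubleCoset (H : Subgroup G) : Type _ :=
  {q : DoubleCoset.Quotient (H : Set G) (H : Set G) //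
    q.out ∉ Subgroup.normalizer (H : Set G)}

lemma exists_free_rep (H : Subgroup G) {g : G} (hg : g ∉ Subgroup.normalizer (H : Set G)) :
    ∃ (r : FreeDoubleCoset H) (a b : H), g = a * r.1.out * b := by
  obtain ⟨h, k, hh, hk, e⟩ := DoubleCoset.mk_out_eq_mul H H g
  refine ⟨⟨DoubleCoset.mk H H g, ?_⟩, ⟨h⁻¹, H.inv_mem hh⟩, ⟨k⁻¹, H.inv_mem hk⟩, ?_⟩
  · intro hm
    apply hg
    rw [e] at hm
    have h1 := Subgroup.le_normalizer (H := H) hh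
    have h2 := Subgroup.le_normalizer (H := H) hk
    rwa [Subgroup.mul_mem_cancel_right _ h2, Subgroup.mul_mem_cancel_left _ h1] at hm
  · simp only [e]
    group

lemma free_rep_unique [Finite G] {H : Subgroup G} (hp : (Nat.card H).Prime) {r r' : FreeDoubleCoset H}
    {a b a' b' : H} (e : (a : G) * r.1.out * b = a' * r'.1.out * b') :
    r = r' ∧ a = a' ∧ b = b' := by
  have hr : r = r' := by
    apply Subtype.ext
    rw [← DoubleCoset.out_eq' H H r.1, ← DoubleCoset.out_eq' H H r'.1, DoubleCoset.eq]
    refine ⟨(a' : G)⁻¹ * a, H.mul_mem (H.inv_mem a'.2) a.2, b * (b' : G)⁻¹,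
      H.mul_mem b.2 (H.inv_mem b'.2), ?_⟩
    calc r'.1.out = (a' : G)⁻¹ * (a' * r'.1.out * b') * (b' : G)⁻¹ := by group
      _ = _ := by rw [← e]; group
  subst hr
  have e2 : r.1.out * (b * (b' : G)⁻¹) * (r.1.out)⁻¹ = (a : G)⁻¹ * a' := by
    calc _ = (a : G)⁻¹ * (a * r.1.out * b) * (b' : G)⁻¹ * (r.1.out)⁻¹ := by group
      _ = _ := by rw [e]; group
  have hb : (b : G) = b' := by
    by_contra hne
    refine r.2 (mem_normalizer_of_conj_mem hp (a := b * (b' : G)⁻¹)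
      (H.mul_mem b.2 (H.inv_mem b'.2)) ?_ ?_)
    · rwa [Ne, mul_inv_eq_one]
    · rw [e2]; exact H.mul_mem (H.inv_mem a.2) a'.2
  refine ⟨rfl, ?_, Subtype.ext hb⟩
  rw [hb] at e
  exact Subtype.ext (mul_right_cancel (mul_right_cancel e))

lemma card_eq_card_normalizer_add [Finite G] {H : Subgroup G} (hp : (Nat.card H).Prime) :
    Nat.card G = Nat.card (Subgroup.normalizer (H : Set G)) +
      Nat.card (FreeDoubleCoset H) * Nat.card H ^ 2 := by
  have e : {g : G // g ∉ Subgroup.normalizer (H : Set G)} ≃ FreeDoubleCoset H × H × H := by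
    have hmem : ∀ x : FreeDoubleCoset H × H × H,
        (x.2.1 * x.1.1.out * x.2.2 : G) ∉ Subgroup.normalizer (H : Set G) := by
      intro x
      have h1 := Subgroup.le_normalizer (H := H) x.2.1.2
      have h2 := Subgroup.le_normalizer (H := H) x.2.2.2
      rw [Subgroup.mul_mem_cancel_right _ h2, Subgroup.mul_mem_cancel_left _ h1]
      exact x.1.2
    refine (Equiv.ofBijective
      (fun x : FreeDoubleCoset H × H × H => ⟨x.2.1 * x.1.1.out * x.2.2, hmem x⟩) ⟨?_, ?_⟩).symm
    · rintro ⟨r, a, b⟩ ⟨r', a', b'⟩ h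
      obtain ⟨rfl, rfl, rfl⟩ := free_rep_unique hp (Subtype.ext_iff.1 h)
      rfl
    · rintro ⟨g, hg⟩
      obtain ⟨r, a, b, e⟩ := exists_free_rep H hg
      exact ⟨(r, a, b), Subtype.ext e.symm⟩
  have := Nat.card_congr (Equiv.sumCompl (fun g : G => g ∈ Subgroup.normalizer (H : Set G)))
  rw [Nat.card_sum, Nat.card_congr e, Nat.card_prod, Nat.card_prod, ← sq] at this
  exact this.symm

/-- On a free double coset `HrH ≃ H × H`, the left cosets are the rows and the right cosets the columns,
so a common transversal `T` traces the graph of a permutation of `H`. -/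
noncomputable def IsDoubleTransversal.perm [Finite G] {H : Subgroup G} (hp : (Nat.card H).Prime) {T : Set G}
    (hT : IsDoubleTransversal H H T) (r : FreeDoubleCoset H) : Equiv.Perm H := by
  have hex : ∀ a : H, ∃ b : H, (a : G) * r.1.out * b ∈ T := by
    intro a
    obtain ⟨t, ⟨ht, hm⟩, -⟩ := hT.1 (a * r.1.out)
    exact ⟨⟨_, hm⟩, by simpa only [mul_inv_cancel_left] using ht⟩
  refine Equiv.ofBijective (fun a => (hex a).choose)
    (Finite.injective_iff_bijective.1 fun a a' h => ?_)
  have h1 := (hex a).choose_spec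
  have h2 := (hex a').choose_spec
  have h' : (hex a).choose = (hex a').choose := h
  rw [← h'] at h2
  obtain ⟨t, -, hu⟩ := hT.2 (r.1.out * (hex a).choose)
  have e1 := hu _ ⟨h1, by simp [mul_assoc]⟩
  have e2 := hu _ ⟨h2, by simp [mul_assoc]⟩
  exact (free_rep_unique hp (e1.trans e2.symm)).2.1

lemma IsDoubleTransversal.perm_mem [Finite G] {H : Subgroup G} (hp : (Nat.card H).Prime) {T : Set G}
    (hT : IsDoubleTransversal H H T) (r : FreeDoubleCoset H) (a b : H) :
    (a : G) * r.1.out * b ∈ T ↔ hT.perm hp r a = b := by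
  have hex : ∃ b : H, (a : G) * r.1.out * b ∈ T := by
    obtain ⟨t, ⟨ht, hm⟩, -⟩ := hT.1 (a * r.1.out)
    exact ⟨⟨_, hm⟩, by simpa only [mul_inv_cancel_left] using ht⟩
  have hspec : (a : G) * r.1.out * (hT.perm hp r a) ∈ T := by
    simpa [IsDoubleTransversal.perm] using hex.choose_spec
  constructor
  · intro h
    obtain ⟨t, -, hu⟩ := hT.1 (a * r.1.out)
    have e1 := hu _ ⟨h, by rw [inv_mul_cancel_left]; exact b.2⟩
    have e2 := hu _ ⟨hspec, by rw [inv_mul_cancel_left]; exact (hT.perm hp r a).2⟩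
    exact (free_rep_unique hp (e2.trans e1.symm)).2.2
  · rintro rfl
    exact hspec

/-- A common transversal is determined by one permutation of `H` for each free double coset and one
element of `H` for each coset in the normaliser. -/
lemma numDT_le [Finite G] {H : Subgroup G} (hp : (Nat.card H).Prime) :
    numDT H H ≤ (Nat.card H)! ^ Nat.card (FreeDoubleCoset H) *
      Nat.card H ^ (H.relIndex (Subgroup.normalizer (H : Set G))) := by
  set N := Subgroup.normalizer (H : Set G) with hN
  have hex : ∀ (T : {T : Set G // IsDoubleTransversal H H T}) (q : N ⧸ H.subgroupOf N),
      ∃ b : H, (q.out : G) * b ∈ T.1 := by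
    intro T q
    obtain ⟨t, ⟨ht, hm⟩, -⟩ := T.2.1 (q.out : G)
    exact ⟨⟨_, hm⟩, by simpa using ht⟩
  choose f hf using hex
  let F : {T : Set G // IsDoubleTransversal H H T} →
      (FreeDoubleCoset H → Equiv.Perm H) × (N ⧸ H.subgroupOf N → H) :=
    fun T => (fun r => T.2.perm hp r, f T)
  have hF : Function.Injective F := by
    intro T T' h
    have h1 : ∀ r, T.2.perm hp r = T'.2.perm hp r := fun r => congrFun (congrArg Prod.fst h) r
    have h2 : ∀ q, f T q = f T' q := fun q => congrFun (congrArg Prod.snd h) q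
    have mem_iff : ∀ (S : {T : Set G // IsDoubleTransversal H H T}) (g : G) (hg : g ∈ N),
        g ∈ S.1 ↔ g = ((QuotientGroup.mk (s := H.subgroupOf N) ⟨g, hg⟩).out : G) *
          f S (QuotientGroup.mk (s := H.subgroupOf N) ⟨g, hg⟩) := by
      intro S g hg
      set q : N ⧸ H.subgroupOf N := QuotientGroup.mk ⟨g, hg⟩ with hq
      constructor
      · intro hgS
        obtain ⟨t, -, hu⟩ := S.2.1 (q.out : G)
        have hm : (q.out : G)⁻¹ * g ∈ H := by
          have : q.out⁻¹ * (⟨g, hg⟩ : N) ∈ H.subgroupOf N := by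
            rw [← QuotientGroup.eq, QuotientGroup.out_eq']
          simpa [Subgroup.mem_subgroupOf] using this
        exact (hu _ ⟨hgS, hm⟩).trans (hu _ ⟨hf S q, by simp⟩).symm
      · intro e
        rw [e]
        exact hf S q
    apply Subtype.ext
    ext g
    by_cases hg : g ∈ N
    · rw [mem_iff T g hg, mem_iff T' g hg, h2]
    · obtain ⟨r, a, b, rfl⟩ := exists_free_rep H hg
      rw [T.2.perm_mem hp, T'.2.perm_mem hp, h1]
  have : Finite (DoubleCoset.Quotient (H : Set G) (H : Set G)) := Quotient.finite _
  have := Nat.card_le_card_of_injective F hF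
  rw [Nat.card_prod, Nat.card_fun, Nat.card_fun, Nat.card_perm] at this
  exact this

lemma transProb_le [Finite G] {H : Subgroup G} (hp : (Nat.card H).Prime) :
    transProb H H ≤
      (((Nat.card H)! : ℚ) / (Nat.card H : ℚ) ^ Nat.card H) ^ Nat.card (FreeDoubleCoset H) := by
  set N := Subgroup.normalizer (H : Set G) with hN
  set k := Nat.card (FreeDoubleCoset H)
  have hpos : 0 < Nat.card H := hp.pos
  have hidx : H.index = H.relIndex N + k * Nat.card H := by
    have h1 := H.card_mul_index
    have h2 : Nat.card H * H.relIndex N = Nat.card N := by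
      have := Subgroup.card_mul_index (H.subgroupOf N)
      rwa [Nat.card_congr (Subgroup.subgroupOfEquivOfLe Subgroup.le_normalizer).toEquiv] at this
    have h3 := card_eq_card_normalizer_add hp
    rw [← h1, ← hN, ← h2] at h3
    apply Nat.eq_of_mul_eq_mul_left hpos
    rw [h3]; ring
  have hq : (0 : ℚ) < Nat.card H := by exact_mod_cast hpos
  have hle : (numDT H H : ℚ) ≤ ((Nat.card H)! : ℚ) ^ k * (Nat.card H : ℚ) ^ (H.relIndex N) := by
    exact_mod_cast numDT_le hp
  rw [transProb, div_pow, hidx, div_le_div_iff₀ (by positivity) (by positivity)]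
  refine (mul_le_mul_of_nonneg_right hle (by positivity)).trans_eq ?_
  rw [pow_add, mul_comm k, pow_mul]
  ring

end Counting

/-! ### Passing to quotients -/

section Quot

variable {G : Type*} [Group G]

lemma IsDoubleTransversal.map_mk {M : Subgroup G} [M.Normal] {K : Subgroup (G ⧸ M)} {T : Set G}
    (hT : IsDoubleTransversal (K.comap (QuotientGroup.mk' M)) (K.comap (QuotientGroup.mk' M)) T) :
    IsDoubleTransversal K K (QuotientGroup.mk' M '' T) := by
  constructor
  · intro g
    obtain ⟨g, rfl⟩ := QuotientGroup.mk'_surjective M g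
    obtain ⟨t, ⟨ht, hm⟩, hu⟩ := hT.1 g
    refine ⟨QuotientGroup.mk' M t, ⟨⟨t, ht, rfl⟩, by simpa using hm⟩, ?_⟩
    rintro _ ⟨⟨s, hs, rfl⟩, hs2⟩
    rw [hu s ⟨hs, by simpa using hs2⟩]
  · intro g
    obtain ⟨g, rfl⟩ := QuotientGroup.mk'_surjective M g
    obtain ⟨t, ⟨ht, hm⟩, hu⟩ := hT.2 g
    refine ⟨QuotientGroup.mk' M t, ⟨⟨t, ht, rfl⟩, by simpa using hm⟩, ?_⟩
    rintro _ ⟨⟨s, hs, rfl⟩, hs2⟩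
    rw [hu s ⟨hs, by simpa using hs2⟩]

/-- A common transversal `T` of the preimage of `K` is determined by its image in `G ⧸ M` and, for each
left coset of `K`, the position of the corresponding element of `T` within its coset of `M`. -/
lemma numDT_comap_le [Finite G] (M : Subgroup G) [M.Normal] (K : Subgroup (G ⧸ M)) :
    numDT (K.comap (QuotientGroup.mk' M)) (K.comap (QuotientGroup.mk' M)) ≤
      numDT K K * Nat.card M ^ K.index := by
  set π := QuotientGroup.mk' M with hπ
  set H := K.comap π with hH
  have hex : ∀ (T : {T : Set G // IsDoubleTransversal H H T}) (c : (G ⧸ M) ⧸ K),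
      ∃ t ∈ T.1, c.out⁻¹ * π t ∈ K := by
    intro T c
    obtain ⟨g, hg⟩ : ∃ g, π g = c.out := QuotientGroup.mk'_surjective M _
    obtain ⟨t, ⟨ht, hm⟩, -⟩ := T.2.1 g
    refine ⟨t, ht, ?_⟩
    rw [← hg]
    simpa [hH] using hm
  choose τ hτ hτK using hex
  have hM : ∀ t : G, (π t).out⁻¹ * t ∈ M := by
    intro t
    rw [← QuotientGroup.eq, QuotientGroup.out_eq']
    rfl
  let F : {T : Set G // IsDoubleTransversal H H T} →
      {T : Set (G ⧸ M) // IsDoubleTransversal K K T} × ((G ⧸ M) ⧸ K → M) :=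
    fun T => (⟨π '' T.1, T.2.map_mk⟩, fun c => ⟨(π (τ T c)).out⁻¹ * τ T c, hM _⟩)
  have hle : ∀ T T', F T = F T' → T.1 ⊆ T'.1 := by
    intro T T' h t ht
    have h1 : π '' T.1 = π '' T'.1 := congrArg Subtype.val (congrArg Prod.fst h)
    set c : (G ⧸ M) ⧸ K := QuotientGroup.mk (π t) with hc
    have h2 : (π (τ T c)).out⁻¹ * τ T c = (π (τ T' c)).out⁻¹ * τ T' c :=
      congrArg Subtype.val (congrFun (congrArg Prod.snd h) c)
    have hct : c.out⁻¹ * π t ∈ K := by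
      rw [← QuotientGroup.eq, QuotientGroup.out_eq']
    have huniq : ∀ s ∈ T.1, c.out⁻¹ * π s ∈ K → s = t := by
      intro s hs hsK
      obtain ⟨g, hg⟩ : ∃ g, π g = c.out := QuotientGroup.mk'_surjective M _
      obtain ⟨u, -, hu⟩ := T.2.1 g
      rw [← hg] at hsK hct
      exact (hu s ⟨hs, by simpa [hH] using hsK⟩).trans (hu t ⟨ht, by simpa [hH] using hct⟩).symm
    have e1 : τ T c = t := huniq _ (hτ T c) (hτK T c)
    have e2 : π (τ T' c) = π t := by
      obtain ⟨s, hs, hs'⟩ : π (τ T' c) ∈ π '' T.1 := h1 ▸ ⟨_, hτ T' c, rfl⟩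
      rw [← hs', huniq s hs (by rw [hs']; exact hτK T' c)]
    rw [e2, e1] at h2
    rw [mul_left_cancel h2]
    exact hτ T' c
  have hF : Function.Injective F := fun T T' h =>
    Subtype.ext ((hle T T' h).antisymm (hle T' T h.symm))
  have := Nat.card_le_card_of_injective F hF
  rw [Nat.card_prod, Nat.card_fun] at this
  exact this

lemma transProb_comap_le [Finite G] (M : Subgroup G) [M.Normal] (K : Subgroup (G ⧸ M)) :
    transProb (K.comap (QuotientGroup.mk' M)) (K.comap (QuotientGroup.mk' M)) ≤
      transProb K K := by
  have hidx := K.index_comap_of_surjective (QuotientGroup.mk'_surjective M)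
  have hcard : Nat.card (K.comap (QuotientGroup.mk' M)) = Nat.card K * Nat.card M := by
    apply Nat.eq_of_mul_eq_mul_right (Nat.pos_of_ne_zero K.index_ne_zero_of_finite)
    conv_lhs => rw [← hidx, Subgroup.card_mul_index]
    rw [mul_right_comm, Subgroup.card_mul_index]
    exact Subgroup.card_eq_card_quotient_mul_card_subgroup M
  have h := numDT_comap_le M K
  have h' : (numDT (K.comap (QuotientGroup.mk' M)) (K.comap (QuotientGroup.mk' M)) : ℚ) ≤
      numDT K K * (Nat.card M : ℚ) ^ K.index := by exact_mod_cast h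
  have hK : (0 : ℚ) < Nat.card K := by exact_mod_cast Nat.card_pos
  have hMpos : (0 : ℚ) < Nat.card M := by exact_mod_cast Nat.card_pos
  rw [transProb, transProb, hidx, hcard, Nat.cast_mul,
    div_le_div_iff₀ (by positivity) (by positivity)]
  refine (mul_le_mul_of_nonneg_right h' (by positivity)).trans_eq ?_
  rw [mul_pow]
  ring

lemma tp_le_tp_quotient [Finite G] (M : Subgroup G) [M.Normal] : tp G ≤ tp (G ⧸ M) := by
  conv_rhs => unfold tp
  refine Finset.le_inf' _ _ fun K _ => ?_
  exact (tp_le_transProb _).trans (transProb_comap_le M K)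

lemma HasSectionIsomorphicTo.of_quotient {X : Type*} [Group X] (M : Subgroup G) [M.Normal]
    (h : HasSectionIsomorphicTo (G ⧸ M) X) : HasSectionIsomorphicTo G X := by
  obtain ⟨K, φ, hφ⟩ := h
  refine ⟨K.comap (QuotientGroup.mk' M), φ.comp ((QuotientGroup.mk' M).subgroupComap K), ?_⟩
  exact hφ.comp
    ((QuotientGroup.mk' M).subgroupComap_surjective_of_surjective K
      (QuotientGroup.mk'_surjective M))

lemma IsSupersoluble.of_quotient (x : G) [(Subgroup.zpowers x).Normal]
    (h : IsSupersoluble (G ⧸ Subgroup.zpowers x)) : IsSupersoluble G := by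
  obtain ⟨n, c, h0, h1, hmono, hnorm, hcyc⟩ := h
  set π := QuotientGroup.mk' (Subgroup.zpowers x) with hπ
  have hsurj : Function.Surjective π := QuotientGroup.mk'_surjective _
  refine ⟨n + 1, Fin.cons ⊥ (fun i => (c i).comap π), rfl, ?_, ?_, ?_, ?_⟩
  · rw [← Fin.succ_last, Fin.cons_succ, h1, Subgroup.comap_top]
  · intro i j hij
    induction i using Fin.cases with
    | zero => simp
    | succ i =>
      induction j using Fin.cases with
      | zero => simp at hij
      | succ j =>
        simp only [Fin.cons_succ]
        exact Subgroup.comap_mono (hmono (by simpa using hij))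
  · intro i
    induction i using Fin.cases with
    | zero => simp only [Fin.cons_zero]; infer_instance
    | succ i =>
      simp only [Fin.cons_succ]
      exact (hnorm i).comap π
  · intro i
    induction i using Fin.cases with
    | zero =>
      refine ⟨x, ?_⟩
      simp only [Fin.cons_succ, Fin.castSucc_zero, Fin.cons_zero, sup_bot_eq]
      rw [h0, ← Subgroup.zpowers_eq_closure, MonoidHom.comap_bot, hπ, QuotientGroup.ker_mk']
    | succ i =>
      obtain ⟨y, hy⟩ := hcyc i
      obtain ⟨y, rfl⟩ := hsurj y
      refine ⟨y, ?_⟩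
      rw [← Fin.succ_castSucc, Fin.cons_succ, Fin.cons_succ]
      refine (Subgroup.comap_mono hy).trans ?_
      rw [← Subgroup.map_comap_eq_self_of_surjective hsurj (c i.castSucc)]
      have e : Subgroup.closure {π y} = (Subgroup.closure {y}).map π := by
        rw [MonoidHom.map_closure, Set.image_singleton]
      rw [e, ← Subgroup.map_sup, Subgroup.comap_map_eq,
        Subgroup.map_comap_eq_self_of_surjective hsurj]
      refine sup_le le_rfl (le_sup_of_le_right ?_)
      exact MonoidHom.ker_le_comap π _

end Quot

/-! ### Subgroups of prime order and their normalisers -/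

lemma index_eq_of_card {G : Type*} [Group G] [Finite G] (N : Subgroup G) {a b : ℕ} (ha : 0 < a)
    (h : Nat.card N = a) (hG : Nat.card G = a * b) : N.index = b := by
  have := N.card_mul_index
  rw [h, hG] at this
  exact Nat.eq_of_mul_eq_mul_left ha this

section Core

open scoped Nat

variable {G : Type*} [Group G]

lemma factorial_bound {p : ℕ} (hp : 8 ≤ p) : 256 * p ! ≤ p ^ p := by
  induction p, hp using Nat.le_induction with
  | base => decide
  | succ p hp ih =>
    calc 256 * (p + 1)! = (p + 1) * (256 * p !) := by rw [Nat.factorial_succ]; ring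
      _ ≤ (p + 1) * (p + 1) ^ p :=
        Nat.mul_le_mul_left _ (ih.trans (Nat.pow_le_pow_left (Nat.le_succ p) p))
      _ = (p + 1) ^ (p + 1) := by ring

/-- The order of the normaliser of the cyclic subgroup generated by `x`. -/
noncomputable abbrev ncard (x : G) : ℕ :=
  Nat.card (Subgroup.normalizer (Subgroup.zpowers x : Set G))

/-- The largest `k` with `(p! / p ^ p) ^ k > 1 / 2 ^ 8`, for `p` prime: the number of free double cosets
that the bound on `tp` allows for a subgroup of order `p`. -/
def maxFree (p : ℕ) : ℕ :=
  if p = 2 then 7 else if p = 3 then 3 else if p < 8 then 1 else 0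

lemma le_maxFree {p k : ℕ} (hp : p.Prime)
    (h : (1 / 2 : ℚ) ^ 8 < ((p ! : ℚ) / (p : ℚ) ^ p) ^ k) : k ≤ maxFree p := by
  by_contra! hk
  have hq : (0 : ℚ) ≤ (p ! : ℚ) / (p : ℚ) ^ p := by positivity
  have hle1 : (p ! : ℚ) / (p : ℚ) ^ p ≤ 1 := by
    have : p ! ≤ p ^ p := Nat.factorial_le_pow p
    rw [div_le_one (by have := hp.pos; positivity)]
    exact_mod_cast this
  have hmono : ((p ! : ℚ) / (p : ℚ) ^ p) ^ k ≤ ((p ! : ℚ) / (p : ℚ) ^ p) ^ (maxFree p + 1) :=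
    pow_le_pow_of_le_one hq hle1 hk
  have h2 := h.trans_le hmono
  by_cases h8 : 8 ≤ p
  · have hm : maxFree p = 0 := by unfold maxFree; split_ifs <;> omega
    have hb : (256 : ℚ) * (p ! : ℚ) ≤ (p : ℚ) ^ p := by exact_mod_cast factorial_bound h8
    rw [hm, zero_add, pow_one, lt_div_iff₀ (by have := hp.pos; positivity)] at h2
    linarith
  · interval_cases p
    all_goals first
      | (exfalso; revert hp; decide)
      | (norm_num [maxFree, Nat.factorial] at h2)

/-- Here `k` is the number of free double cosets of `⟨x⟩`; it is positive because `⟨x⟩` is not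
normal. -/
lemma prime_data [Finite G] (h : tp G > (1 / 2 : ℚ) ^ 8) (hno : ∀ x : G, x ≠ 1 → ¬ (Subgroup.zpowers x).Normal)
    {p : ℕ} (hp : p.Prime) {x : G} (hx : orderOf x = p) :
    ∃ k, 0 < k ∧ k ≤ maxFree p ∧ Nat.card G = ncard x + k * p ^ 2 ∧ p ∣ ncard x ∧
      ncard x ∣ Nat.card G := by
  have hc : Nat.card (Subgroup.zpowers x) = p := by rw [Nat.card_zpowers, hx]
  have hp' : (Nat.card (Subgroup.zpowers x)).Prime := hc ▸ hp
  have h1 := card_eq_card_normalizer_add hp'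
  have h2 := transProb_le hp'
  rw [hc] at h1 h2
  refine ⟨_, ?_, le_maxFree hp (h.trans_le ((tp_le_transProb _).trans h2)), h1, ?_, ?_⟩
  · rw [Nat.pos_iff_ne_zero]
    intro h0
    rw [h0, zero_mul, add_zero] at h1
    have ht := Subgroup.eq_top_of_card_eq _ h1.symm
    refine hno x ?_ (Subgroup.normalizer_eq_top_iff.1 ht)
    rintro rfl
    rw [orderOf_one] at hx
    exact hp.ne_one hx.symm
  · rw [← hc]
    exact Subgroup.card_dvd_of_le Subgroup.le_normalizer
  · exact Subgroup.card_subgroup_dvd_card _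

lemma exists_orderOf [Finite G] {p : ℕ} (hp : p.Prime) (h : p ∣ Nat.card G) : ∃ x : G, orderOf x = p :=
  haveI := Fact.mk hp
  exists_prime_orderOf_dvd_card' p h

lemma exists_orderOf_mem [Finite G] {p : ℕ} (hp : p.Prime) (K : Subgroup G) (h : p ∣ Nat.card K) :
    ∃ x ∈ K, orderOf x = p := by
  obtain ⟨x, hx⟩ := exists_orderOf hp h
  exact ⟨x, x.2, by rw [← hx, Subgroup.orderOf_coe]⟩

lemma mem_normalizer_of_commute {x y : G} (h : y * x = x * y) :
    y ∈ Subgroup.normalizer (Subgroup.zpowers x : Set G) := by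
  apply Subgroup.centralizer_le_normalizer
  rw [Subgroup.mem_centralizer_iff]
  rintro _ ⟨n, rfl⟩
  exact ((Commute.zpow_right (show Commute y x from h) n).eq).symm

lemma commute_of_mem_normalizer_involution [Finite G] {t y : G} (ht : orderOf t = 2)
    (h : y ∈ Subgroup.normalizer (Subgroup.zpowers t : Set G)) : y * t = t * y := by
  have hm := conj_mem_of_mem_normalizer h (Subgroup.mem_zpowers t)
  rw [mem_zpowers_iff_mem_range_orderOf, ht] at hm
  simp only [Finset.mem_image, Finset.mem_range] at hm
  obtain ⟨n, hn, e⟩ := hm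
  interval_cases n
  · rw [pow_zero, eq_comm, conj_eq_one_iff] at e
    rw [e, orderOf_one] at ht
    omega
  · rw [pow_one] at e
    rw [eq_mul_inv_iff_mul_eq] at e
    exact e.symm

lemma dvd_ncard_of_mem {x y : G} (h : y ∈ Subgroup.normalizer (Subgroup.zpowers x : Set G)) :
    orderOf y ∣ ncard x := Subgroup.orderOf_dvd_natCard _ h

lemma exists_commuting [Finite G] {t : G} (ht : orderOf t = 2) {q : ℕ} (hq : q.Prime) (h : q ∣ ncard t) :
    ∃ y, orderOf y = q ∧ t * y = y * t ∧ 2 ∣ ncard y := by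
  obtain ⟨y, hy, hyq⟩ := exists_orderOf_mem hq _ h
  have hc := (commute_of_mem_normalizer_involution ht hy).symm
  exact ⟨y, hyq, hc, ht ▸ dvd_ncard_of_mem (mem_normalizer_of_commute hc)⟩

lemma index_le_card_orderOf [Finite G] (x : G) {p : ℕ} (hx : orderOf x = p) :
    (Subgroup.normalizer (Subgroup.zpowers x : Set G)).index ≤ Nat.card {y : G // orderOf y = p} := by
  refine Nat.card_le_card_of_injective
    (fun q : G ⧸ (Subgroup.normalizer (Subgroup.zpowers x : Set G)) =>
      (⟨q.out * x * q.out⁻¹, ?_⟩ : {y : G // orderOf y = p})) ?_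
  · rw [← hx]
    exact MulEquiv.orderOf_eq (MulAut.conj q.out) x
  · intro a b hab
    have e : a.out * x * a.out⁻¹ = b.out * x * b.out⁻¹ := Subtype.ext_iff.1 hab
    rw [← QuotientGroup.out_eq' a, ← QuotientGroup.out_eq' b, QuotientGroup.eq]
    apply mem_normalizer_of_commute
    calc a.out⁻¹ * b.out * x = a.out⁻¹ * (b.out * x * b.out⁻¹) * b.out := by group
      _ = _ := by rw [← e]; group

lemma card_orderOf_add_le [Finite G] :
    Nat.card {y : G // orderOf y = 2} + Nat.card {y : G // orderOf y = 3} +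
      Nat.card {y : G // orderOf y = 5} ≤ Nat.card G := by
  have hF : Function.Injective (Sum.elim (Sum.elim (Subtype.val : {y : G // orderOf y = 2} → G)
      (Subtype.val : {y : G // orderOf y = 3} → G))
      (Subtype.val : {y : G // orderOf y = 5} → G)) := by
    rintro ((⟨a, ha⟩ | ⟨a, ha⟩) | ⟨a, ha⟩) ((⟨b, hb⟩ | ⟨b, hb⟩) | ⟨b, hb⟩) h <;>
      simp only [Sum.elim_inl, Sum.elim_inr] at h <;> subst h <;> first | rfl | omega
  have := Nat.card_le_card_of_injective _ hF
  rwa [Nat.card_sum, Nat.card_sum] at this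

/-- A subgroup of `S₄` of order divisible by 12 contains `A₄`, since `A₄` is the only subgroup of
index 2. -/
lemma section_of_embedding {α : Type*} [Finite α] (hα : Nat.card α = 4) (f : G →* Equiv.Perm α)
    (hf : Function.Injective f) (hG : 12 ∣ Nat.card G) :
    HasSectionIsomorphicTo G (alternatingGroup (Fin 4)) := by
  let e : Equiv.Perm α ≃* Equiv.Perm (Fin 4) := (Finite.equivFinOfCardEq hα).permCongrHom
  let ψ : G →* Equiv.Perm (Fin 4) := e.toMonoidHom.comp f
  have hψ : Function.Injective ψ := e.injective.comp hf
  have hle : alternatingGroup (Fin 4) ≤ ψ.range := by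
    have hc : Nat.card ψ.range = Nat.card G :=
      (Nat.card_congr (MonoidHom.ofInjective hψ).toEquiv).symm
    have hi := ψ.range.card_mul_index
    rw [hc, Nat.card_perm, Nat.card_fin] at hi
    obtain ⟨m, hm⟩ := hG
    have h2 : ψ.range.index ∣ 2 := by
      refine ⟨m, ?_⟩
      rw [hm] at hi
      simp only [Nat.factorial] at hi
      linarith
    rcases (Nat.dvd_prime Nat.prime_two).1 h2 with h1 | h1
    · rw [Subgroup.index_eq_one.1 h1]; exact le_top
    · rw [Equiv.Perm.eq_alternatingGroup_of_index_eq_two h1]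
  refine ⟨(alternatingGroup (Fin 4)).comap ψ, ψ.subgroupComap _, ?_⟩
  rintro ⟨y, hy⟩
  obtain ⟨g, rfl⟩ := hle hy
  exact ⟨⟨g, hy⟩, rfl⟩

end Core

/-! ### The possible group orders -/

section Cases

variable {G : Type*} [Group G] [Finite G]

/-- The arithmetic of `g = d + k p²` with `p ∣ d ∣ g` and `1 ≤ k ≤ maxFree p`, where `g` stands for
`|G|` and `d` for the order of the normaliser of a subgroup of order `p`. -/
lemma numeric {p g d k : ℕ} (hk0 : 0 < k) (hk : k ≤ maxFree p) (hg : g = d + k * p ^ 2)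
    (hpd : p ∣ d) (hd : d ∣ g) :
    (p = 7 → g = 56 ∧ d = 7 ∨ g = 98) ∧
    (p = 5 → g = 30 ∧ d = 5 ∨ g = 50) ∧
    (p = 3 → g = 12 ∧ d = 3 ∨ g = 18 ∧ d = 9 ∨ g = 21 ∨ g = 24 ∧ d = 6 ∨ g = 27 ∨
      g = 30 ∧ d = 3 ∨ g = 36 ∧ (d = 9 ∨ d = 18) ∨ g = 54) ∧
    (p = 2 → g ≠ 50 ∧ g ≠ 54 ∧ g ≠ 98 ∧ (g = 56 → 7 ∣ d) ∧
      (g = 30 → d = 2 ∨ 3 ∣ d ∨ 5 ∣ d) ∧ (g = 36 → d = 12)) := by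
  have hdk : d ∣ k * p ^ 2 := (Nat.dvd_add_right (dvd_refl d)).1 (hg ▸ hd)
  refine ⟨?_, ?_, ?_, ?_⟩
  · rintro rfl
    have hk' : k = 1 := by simp [maxFree] at hk; omega
    subst hk'
    have : d ≤ 49 := Nat.le_of_dvd (by norm_num) hdk
    interval_cases d <;> omega
  · rintro rfl
    have hk' : k = 1 := by simp [maxFree] at hk; omega
    subst hk'
    have : d ≤ 25 := Nat.le_of_dvd (by norm_num) hdk
    interval_cases d <;> omega
  · rintro rfl
    simp [maxFree] at hk
    interval_cases k <;>
    · have := Nat.le_of_dvd (by norm_num) hdk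
      interval_cases d <;> omega
  · rintro rfl
    simp [maxFree] at hk
    refine ⟨?_, ?_, ?_, ?_, ?_, ?_⟩
    all_goals
      intro h
      subst h
      have := Nat.le_of_dvd (by norm_num) hd
      clear hdk
      interval_cases d <;> omega

/-- A `p`-group has nontrivial centre, hence a nontrivial cyclic normal subgroup. -/
lemma card_ne_prime_pow (hno : ∀ x : G, x ≠ 1 → ¬ (Subgroup.zpowers x).Normal)
    {p n : ℕ} (hp : p.Prime) (hG : 1 < Nat.card G) : Nat.card G ≠ p ^ n := by
  intro hc
  have : Fact p.Prime := ⟨hp⟩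
  have : Nontrivial G := Finite.one_lt_card_iff_nontrivial.1 hG
  have := (IsPGroup.of_card hc).center_nontrivial
  obtain ⟨⟨z, hz⟩, hz1⟩ := exists_ne (1 : Subgroup.center G)
  refine hno z (by simpa [Subtype.ext_iff] using hz1) ⟨?_⟩
  rintro _ ⟨n, rfl⟩ g
  have : g * z ^ n = z ^ n * g := (Subgroup.mem_center_iff.1 (Subgroup.zpow_mem _ hz n)) g
  refine ⟨n, ?_⟩
  simp only
  rw [this, mul_inv_cancel_right]

lemma card_normal_ne_prime (hno : ∀ x : G, x ≠ 1 → ¬ (Subgroup.zpowers x).Normal)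
    (K : Subgroup G) [hK : K.Normal] : ¬ (Nat.card K).Prime := by
  intro hp
  obtain ⟨x, hx, ho⟩ := exists_orderOf_mem hp K dvd_rfl
  have hz : Subgroup.zpowers x = K :=
    Subgroup.eq_of_le_of_card_ge ((Subgroup.zpowers_le).2 hx) (by rw [Nat.card_zpowers, ho])
  refine hno x ?_ (hz ▸ hK)
  rintro rfl
  rw [orderOf_one] at ho
  exact hp.ne_one ho.symm

/-- The action on the four conjugates of `⟨x⟩` is faithful: its kernel lies in the normaliser `N`
of `⟨x⟩`, which has order 3 or 6 and only the two elements of order 3 in `⟨x⟩`; a kernel of order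
divisible by 3 would make `⟨x⟩` normal, and a kernel of order 2 is itself cyclic normal. -/
lemma section_of_card_12_24 (hno : ∀ x : G, x ≠ 1 → ¬ (Subgroup.zpowers x).Normal)
    {x : G} (hx : orderOf x = 3)
    (hd : ncard x = 3 ∨ ncard x = 6) (hG : Nat.card G = 4 * ncard x) :
    HasSectionIsomorphicTo G (alternatingGroup (Fin 4)) := by
  set N := Subgroup.normalizer (Subgroup.zpowers x : Set G) with hN
  have hidx : N.index = 4 :=
    index_eq_of_card N Nat.card_pos rfl (by rw [hG, mul_comm])
  have huniq : ∀ y ∈ N, orderOf y = 3 → y ∈ Subgroup.zpowers x := by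
    intro y hy hoy
    have hle : Subgroup.zpowers x ≤ N := Subgroup.le_normalizer
    have hc : Nat.card ((Subgroup.zpowers x).subgroupOf N) = 3 := by
      rw [Nat.card_congr (Subgroup.subgroupOfEquivOfLe hle).toEquiv, Nat.card_zpowers, hx]
    have hm := Subgroup.card_mul_index ((Subgroup.zpowers x).subgroupOf N)
    have hn : ((Subgroup.zpowers x).subgroupOf N).Normal := Subgroup.normal_in_normalizer
    have hp := Subgroup.pow_index_mem ((Subgroup.zpowers x).subgroupOf N) ⟨y, hy⟩
    have hp2 : y ^ 2 ∈ Subgroup.zpowers x := by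
      rw [hc] at hm
      have hi : ((Subgroup.zpowers x).subgroupOf N).index ∣ 2 := by
        rcases hd with hd | hd <;> rw [show Nat.card N = _ from hd] at hm
        · exact ⟨2, by omega⟩
        · exact ⟨1, by omega⟩
      obtain ⟨c, hc'⟩ := hi
      have := Subgroup.pow_mem _ hp c
      rw [← pow_mul, ← hc'] at this
      simpa [Subgroup.mem_subgroupOf] using this
    have e : y = (y ^ 2) ^ 2 := by
      calc y = y ^ 3 * y := by rw [← hoy, pow_orderOf_eq_one, one_mul]
        _ = _ := by group
    rw [e]
    exact Subgroup.pow_mem _ hp2 2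
  refine section_of_embedding (α := G ⧸ N) hidx (MulAction.toPermHom G (G ⧸ N)) ?_ ?_
  · rw [← MonoidHom.ker_eq_bot_iff, ← Subgroup.normalCore_eq_ker]
    have hKN : N.normalCore ≤ N := Subgroup.normalCore_le N
    have h3 : ¬ 3 ∣ Nat.card N.normalCore := by
      intro h3
      obtain ⟨y, hy, hoy⟩ := exists_orderOf_mem Nat.prime_three _ h3
      have hz : Subgroup.zpowers y = Subgroup.zpowers x :=
        Subgroup.eq_of_le_of_card_ge (Subgroup.zpowers_le.2 (huniq y (hKN hy) hoy))
          (by rw [Nat.card_zpowers, Nat.card_zpowers, hx, hoy])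
      refine hno y (by rintro rfl; simp at hoy) ⟨fun z hz' g => ?_⟩
      have hc : g * y * g⁻¹ ∈ Subgroup.zpowers y := by
        rw [hz]
        refine huniq _ (hKN ((Subgroup.normalCore_normal N).conj_mem y hy g)) ?_
        rw [← hoy]
        exact MulEquiv.orderOf_eq (MulAut.conj g) y
      obtain ⟨n, rfl⟩ := hz'
      simp only
      rw [← conj_zpow]
      exact Subgroup.zpow_mem _ hc n
    have hdvd : Nat.card N.normalCore ∣ Nat.card N := Subgroup.card_dvd_of_le hKN
    have h2 : ¬ (Nat.card N.normalCore).Prime := card_normal_ne_prime hno _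
    have h6 : Nat.card N.normalCore ∣ 6 := by
      rcases hd with hd | hd
      · exact hdvd.trans ⟨2, by rw [show Nat.card N = 3 from hd]; rfl⟩
      · exact hd ▸ hdvd
    rw [← Subgroup.card_eq_one]
    have := Nat.le_of_dvd (by norm_num) h6
    revert h2 h3 h6
    generalize Nat.card N.normalCore = m at this
    interval_cases m <;> decide
  · rcases hd with hd | hd <;> rw [hG, hd] <;> norm_num

/-- The normaliser `N` of `⟨x⟩` is abelian of order 9 and normal. An involution `t` either inverts `x`
or fixes the element `x · txt⁻¹ ≠ 1` of order 3; in both cases it normalises a subgroup of order 3,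
whose normaliser has odd order. -/
lemma not_card_18 (hG : Nat.card G = 18)
    (h3 : ∀ x : G, orderOf x = 3 → ncard x = 9) : False := by
  obtain ⟨t, ht⟩ := exists_orderOf (G := G) Nat.prime_two (by rw [hG]; norm_num)
  obtain ⟨x, hx⟩ := exists_orderOf (G := G) Nat.prime_three (by rw [hG]; norm_num)
  have hN := h3 x hx
  set N := Subgroup.normalizer (Subgroup.zpowers x : Set G) with hNdef
  have hnorm : N.Normal :=
    Subgroup.normal_of_index_eq_two (index_eq_of_card N (by norm_num) hN hG)
  have : Fact (Nat.Prime 3) := ⟨Nat.prime_three⟩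
  have hcomm := IsPGroup.isMulCommutative_of_card_eq_prime_sq (p := 3) (G := N) (by simpa using hN)
  have hxN : x ∈ N := Subgroup.le_normalizer (Subgroup.mem_zpowers x)
  have hx'N : t * x * t⁻¹ ∈ N := hnorm.conj_mem x hxN t
  have hc : Commute x (t * x * t⁻¹) := by
    have := hcomm.is_comm.comm (⟨x, hxN⟩ : N) ⟨_, hx'N⟩
    exact congrArg Subtype.val this
  have ht2 : t * t = 1 := by rw [← sq, ← ht, pow_orderOf_eq_one]
  have hti : t⁻¹ = t := inv_eq_of_mul_eq_one_left ht2
  have hx3 : x ^ 3 = 1 := by rw [← hx, pow_orderOf_eq_one]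
  -- An element of order 3 normalised by `t` contradicts the oddness of its normaliser.
  have key : ∀ z : G, orderOf z = 3 →
      t ∉ Subgroup.normalizer (Subgroup.zpowers z : Set G) := by
    intro z hz htz
    have := dvd_ncard_of_mem htz
    rw [ht, h3 z hz] at this
    omega
  by_cases hy : x * (t * x * t⁻¹) = 1
  · refine key x hx ?_
    refine mem_normalizer_of_conj_mem (by rw [Nat.card_zpowers, hx]; exact Nat.prime_three)
      (Subgroup.mem_zpowers x) (by rintro rfl; simp at hx) ?_
    rw [← inv_eq_of_mul_eq_one_right hy]
    exact Subgroup.inv_mem _ (Subgroup.mem_zpowers x)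
  · refine key _ (orderOf_eq_prime ?_ hy) (mem_normalizer_of_commute ?_)
    · rw [hc.mul_pow, hx3, conj_pow, hx3]; simp
    · calc t * (x * (t * x * t⁻¹)) = (t * x * t⁻¹) * (t * t) * x * t⁻¹ := by group
        _ = (t * x * t⁻¹) * x * t := by rw [ht2, hti]; group
        _ = _ := by rw [hc.eq]

/-- An involution `t` commutes with some `x` of order 3. The centraliser `M` of `x` then has order 18,
so it is normal, and its centre `Z` (which equals the centraliser of `M` in `G`) is a normal subgroup
of order 3. -/
lemma not_card_36 (hno : ∀ x : G, x ≠ 1 → ¬ (Subgroup.zpowers x).Normal)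
    (hG : Nat.card G = 36) (h2 : ∀ t : G, orderOf t = 2 → ncard t = 12)
    (h3 : ∀ x : G, orderOf x = 3 → ncard x = 9 ∨ ncard x = 18) : False := by
  obtain ⟨t, ht⟩ := exists_orderOf (G := G) Nat.prime_two (by rw [hG]; norm_num)
  obtain ⟨x, hx, htx, hev⟩ := exists_commuting ht Nat.prime_three (by rw [h2 t ht]; norm_num)
  have hN : ncard x = 18 := by rcases h3 x hx with e | e <;> omega
  set M := Subgroup.centralizer ({x} : Set G) with hM
  have memM : ∀ {y}, y ∈ M ↔ y * x = x * y := by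
    intro y; rw [hM, Subgroup.mem_centralizer_singleton_iff]
  have hMN : M ≤ Subgroup.normalizer (Subgroup.zpowers x : Set G) :=
    fun y hy => mem_normalizer_of_commute (memM.1 hy)
  have htM : t ∈ M := memM.2 htx
  have h2M : 2 ∣ Nat.card M := ht ▸ Subgroup.orderOf_dvd_natCard _ htM
  have : Fact (Nat.Prime 3) := ⟨Nat.prime_three⟩
  -- `x` lies in an abelian Sylow 3-subgroup, which therefore centralises `x`.
  have h9M : 9 ∣ Nat.card M := by
    obtain ⟨P, hP⟩ := IsPGroup.exists_le_sylow (p := 3) (P := Subgroup.zpowers x)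
      (IsPGroup.of_card (n := 1) (by rw [Nat.card_zpowers, hx, pow_one]))
    have hPc : Nat.card P = 3 ^ 2 := by
      rw [P.card_eq_multiplicity, hG]
      congr 1
      rw [show 36 = 3 ^ 2 * 4 by norm_num, Nat.factorization_mul (by norm_num) (by norm_num),
        Nat.factorization_pow]
      simp [Nat.prime_three.factorization_self,
        Nat.factorization_eq_zero_of_not_dvd (show ¬ 3 ∣ 4 by norm_num)]
    have hcomm := IsPGroup.isMulCommutative_of_card_eq_prime_sq (p := 3) (G := P) hPc
    have hPM : (P : Subgroup G) ≤ M := by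
      intro y hy
      have := hcomm.is_comm.comm (⟨y, hy⟩ : P) ⟨x, hP (Subgroup.mem_zpowers x)⟩
      exact memM.2 (congrArg Subtype.val this)
    have := Subgroup.card_dvd_of_le hPM
    rwa [hPc] at this
  have hMc : Nat.card M = 18 := by
    have h18 : Nat.card M ∣ 18 := hN ▸ Subgroup.card_dvd_of_le hMN
    have := Nat.le_of_dvd (by norm_num) h18
    have := Nat.card_pos (α := M)
    omega
  have hMn : M.Normal :=
    Subgroup.normal_of_index_eq_two (index_eq_of_card M (by norm_num) hMc hG)
  set Z := Subgroup.centralizer (M : Set G) with hZ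
  have hcomm : ∀ z ∈ Z, ∀ m ∈ M, m * z = z * m := fun z hz m hm =>
    Subgroup.mem_centralizer_iff.1 hz m hm
  have hxZ : x ∈ Z := Subgroup.mem_centralizer_iff.2 fun y hy => memM.1 hy
  have hxM : x ∈ M := memM.2 rfl
  have hZM : Z ≤ M := fun z hz => memM.2 (hcomm z hz x hxM).symm
  -- An involution of `Z` would have centraliser of order divisible by 18, not 12.
  have hodd : ¬ 2 ∣ Nat.card Z := by
    intro hev
    obtain ⟨s, hs, hso⟩ := exists_orderOf_mem Nat.prime_two Z hev
    have hle : M ≤ Subgroup.normalizer (Subgroup.zpowers s : Set G) :=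
      fun m hm => mem_normalizer_of_commute (hcomm s hs m hm)
    have := Subgroup.card_dvd_of_le hle
    rw [hMc, show Nat.card _ = 12 from h2 s hso] at this
    omega
  have h12 : Nat.card Z ∣ 12 := by
    rw [← h2 t ht]
    exact Subgroup.card_dvd_of_le fun z hz =>
      mem_normalizer_of_commute (hcomm z hz t htM).symm
  have h3Z : 3 ∣ Nat.card Z := hx ▸ Subgroup.orderOf_dvd_natCard _ hxZ
  have hZ3 : Nat.card Z = 3 := by
    have := Nat.le_of_dvd (by norm_num) h12
    interval_cases Nat.card Z <;> omega
  exact card_normal_ne_prime hno Z (by rw [hZ3]; exact Nat.prime_three)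

/-- The irreducible case of the theorem: if no nontrivial cyclic subgroup is normal, the only orders
left are 12 and 24. -/
lemma section_of_no_cyclic_normal (h : tp G > (1 / 2 : ℚ) ^ 8)
    (hno : ∀ x : G, x ≠ 1 → ¬ (Subgroup.zpowers x).Normal) (hG : 1 < Nat.card G) :
    HasSectionIsomorphicTo G (alternatingGroup (Fin 4)) := by
  have data : ∀ {p : ℕ}, p.Prime → ∀ x : G, orderOf x = p →
      (p = 7 → Nat.card G = 56 ∧ ncard x = 7 ∨ Nat.card G = 98) ∧
      (p = 5 → Nat.card G = 30 ∧ ncard x = 5 ∨ Nat.card G = 50) ∧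
      (p = 3 → Nat.card G = 12 ∧ ncard x = 3 ∨ Nat.card G = 18 ∧ ncard x = 9 ∨ Nat.card G = 21 ∨
        Nat.card G = 24 ∧ ncard x = 6 ∨ Nat.card G = 27 ∨ Nat.card G = 30 ∧ ncard x = 3 ∨
        Nat.card G = 36 ∧ (ncard x = 9 ∨ ncard x = 18) ∨ Nat.card G = 54) ∧
      (p = 2 → Nat.card G ≠ 50 ∧ Nat.card G ≠ 54 ∧ Nat.card G ≠ 98 ∧
        (Nat.card G = 56 → 7 ∣ ncard x) ∧
        (Nat.card G = 30 → ncard x = 2 ∨ 3 ∣ ncard x ∨ 5 ∣ ncard x) ∧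
        (Nat.card G = 36 → ncard x = 12)) := by
    intro p hp x hx
    obtain ⟨k, hk0, hk, hg, hpd, hd⟩ := prime_data h hno hp hx
    exact numeric hk0 hk hg hpd hd
  have d7 := fun x hx => (data (p := 7) (by norm_num) x hx).1 rfl
  have d5 := fun x hx => (data (p := 5) (by norm_num) x hx).2.1 rfl
  have d3 := fun x hx => (data (p := 3) (by norm_num) x hx).2.2.1 rfl
  have d2 := fun x hx => (data (p := 2) (by norm_num) x hx).2.2.2 rfl
  -- Order 56: an involution commutes with an element of order 7, whose normaliser has order 7.
  by_cases h7 : 7 ∣ Nat.card G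
  · exfalso
    obtain ⟨x, hx⟩ := exists_orderOf (G := G) (by norm_num) h7
    have hg : Nat.card G = 56 ∨ Nat.card G = 98 := by rcases d7 x hx with e | e <;> omega
    obtain ⟨t, ht⟩ := exists_orderOf (G := G) Nat.prime_two (by omega)
    obtain ⟨-, -, n98, f56, -, -⟩ := d2 t ht
    obtain ⟨y, hy, -, hev⟩ := exists_commuting ht (q := 7) (by norm_num) (f56 (by omega))
    rcases d7 y hy with e | e <;> omega
  -- Order 30: all such normalisers have prime order, giving at least `15 + 10 + 6 > 30` elements.
  by_cases h5 : 5 ∣ Nat.card G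
  · exfalso
    obtain ⟨x, hx⟩ := exists_orderOf (G := G) (by norm_num) h5
    have hx5 := d5 x hx
    obtain ⟨t, ht⟩ := exists_orderOf (G := G) Nat.prime_two (by omega)
    obtain ⟨n50, -, -, -, f30, -⟩ := d2 t ht
    have hg : Nat.card G = 30 := by omega
    obtain ⟨y, hy⟩ := exists_orderOf (G := G) Nat.prime_three (by omega)
    have hy3 := d3 y hy
    have ht2 : ncard t = 2 := by
      rcases f30 hg with e | e | e
      · exact e
      · obtain ⟨z, hz, -, hev⟩ := exists_commuting ht Nat.prime_three e
        have := d3 z hz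
        omega
      · obtain ⟨z, hz, -, hev⟩ := exists_commuting ht Nat.prime_five e
        have := d5 z hz
        omega
    have i2 := index_le_card_orderOf t ht
    have i3 := index_le_card_orderOf y hy
    have i5 := index_le_card_orderOf x hx
    rw [index_eq_of_card _ (by norm_num) ht2 (b := 15) (by omega)] at i2
    rw [index_eq_of_card _ (by norm_num) (show ncard y = 3 by omega) (b := 10) (by omega)] at i3
    rw [index_eq_of_card _ (by norm_num) (show ncard x = 5 by omega) (b := 6) (by omega)] at i5
    have := card_orderOf_add_le (G := G)
    omega
  by_cases h3 : 3 ∣ Nat.card G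
  · obtain ⟨x, hx⟩ := exists_orderOf (G := G) Nat.prime_three h3
    by_cases h2 : 2 ∣ Nat.card G
    · obtain ⟨t, ht⟩ := exists_orderOf (G := G) Nat.prime_two h2
      have ht' := d2 t ht
      have n18 : Nat.card G ≠ 18 := fun e =>
        not_card_18 e fun y hy => by have := d3 y hy; omega
      have n36 : Nat.card G ≠ 36 := fun e =>
        not_card_36 hno e (fun s hs => (d2 s hs).2.2.2.2.2 e)
          fun y hy => by have := d3 y hy; omega
      have := d3 x hx
      exact section_of_card_12_24 hno hx (by omega) (by omega)
    · exact absurd (by have := d3 x hx; omega : Nat.card G = 3 ^ 3)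
        (card_ne_prime_pow hno Nat.prime_three hG)
  · exfalso
    refine card_ne_prime_pow hno Nat.prime_two hG
      (Nat.eq_prime_pow_of_unique_prime_dvd (by omega) fun {q} hq hqd => ?_)
    obtain ⟨x, hx⟩ := exists_orderOf (G := G) hq hqd
    obtain ⟨k, hk0, hk, -⟩ := prime_data h hno hq hx
    have hq8 : q < 8 := by
      by_contra hq8
      have : maxFree q = 0 := by unfold maxFree; split_ifs <;> omega
      omega
    interval_cases q <;> first | rfl | contradiction

end Cases

/-! ### Induction on the order -/

universe u

lemma main_induction (n : ℕ) : ∀ (G : Type u) [Group G] [Finite G], Nat.card G = n →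
    tp G > (1 / 2 : ℚ) ^ 8 →
    IsSupersoluble G ∨ HasSectionIsomorphicTo G (alternatingGroup (Fin 4)) := by
  induction n using Nat.strong_induction_on with
  | _ n ih =>
    intro G _ _ hn h
    -- If some nontrivial `⟨x⟩` is normal, pass to `G ⧸ ⟨x⟩`.
    by_cases hno : ∀ x : G, x ≠ 1 → ¬ (Subgroup.zpowers x).Normal
    · rcases Nat.lt_or_ge 1 (Nat.card G) with hG | hG
      · exact Or.inr (section_of_no_cyclic_normal h hno hG)
      · have : Subsingleton G := Finite.card_le_one_iff_subsingleton.1 hG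
        exact Or.inl ⟨0, fun _ => ⊥, rfl, Subsingleton.elim _ _, monotone_const,
          fun _ => inferInstance, fun i => i.elim0⟩
    · push Not at hno
      obtain ⟨x, hx1, hx⟩ := hno
      have hlt : Nat.card (G ⧸ Subgroup.zpowers x) < n := by
        rw [← hn, Subgroup.card_eq_card_quotient_mul_card_subgroup (Subgroup.zpowers x)]
        refine lt_mul_of_one_lt_right Nat.card_pos ?_
        rw [Nat.card_zpowers]
        have := orderOf_pos x
        have : orderOf x ≠ 1 := by rwa [Ne, orderOf_eq_one_iff]
        omega
      rcases ih _ hlt (G ⧸ Subgroup.zpowers x) rfl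
        (h.trans_le (tp_le_tp_quotient (Subgroup.zpowers x))) with hs | hs
      · exact Or.inl (hs.of_quotient x)
      · exact Or.inr (hs.of_quotient (Subgroup.zpowers x))

theorem stmt14 (G : Type*) [Group G] [Finite G] (h : tp G > (1 / 2 : ℚ) ^ 8) :
    IsSupersoluble G ∨ HasSectionIsomorphicTo G (alternatingGroup (Fin 4)) := by
  exact main_induction _ G rfl h
end

section
/- Suppose ∏_{i=1}^n t_i!/t_i^{t_i} = ∏_{i=1}^k p_i!/p_i^{p_i}, where t_1, …, t_n are integers greater than 1 and p_1, …, p_k are pairwise distinct primes. Then k = n and, after a suitable rearrangement, t_i = p_i for all i = 1, …, n; equivalently, the multiset {t_1, …, t_n} equals the multiset {p_1, …, p_k}. -/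
/-!
Write `f t = t! / t ^ t` (`term t` in the code), a strictly decreasing function with values in `(0, 1)` for `t ≥ 2`.
The theorem is proved for a multiset `M` (the `t i`) and a finite set `S` of primes (the `p i`),
by induction on the size of `M`, removing a common element at each step.

Let `T = max M` and let `r` be the largest prime `≤ T`, so that `T < 2 r` by Bertrand's postulate.
For `t < 2 r` the `r`-adic valuation of `f t` is `0`, `1 - r` or `1` according as `t < r`, `t = r`
or `t > r` (`val_term`). Comparing valuations at `max S` shows that no prime of `S` exceeds `T`;
hence all of `S` lies in `[2, r]`. Comparing valuations at `r`, the number of elements of `M`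
exceeding `r` is a multiple of `r - 1`.

* If it is nonzero, then at least `r - 1` elements of `M` are `≥ r + 1`, so the product over `M` is
  at most `f (r + 1) ^ (r - 1)`, while `S` has at most `r - 1` elements, each `≤ r`, so the product
  over `S` is at least `f r ^ (r - 1)`, which is larger: a contradiction.
* If it is zero, then `T = r`, and the valuations force `r ∈ S`; cancel `f r` on both sides.
-/

/-- The factor `t! / t ^ t`. -/
def term (t : ℕ) : ℚ := (t.factorial : ℚ) / (t : ℚ) ^ t

lemma term_pos (t : ℕ) (ht : 1 ≤ t) : 0 < term t := by
  have : 0 < t.factorial := t.factorial_pos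
  unfold term
  positivity

lemma term_succ_lt (t : ℕ) (ht : 1 ≤ t) : term (t + 1) < term t := by
  have h : term (t + 1) = (t.factorial : ℚ) / ((t : ℚ) + 1) ^ t := by
    unfold term
    rw [Nat.factorial_succ, pow_succ]
    push_cast
    field_simp
  rw [h]
  unfold term
  have h1 : (0 : ℚ) < t := by exact_mod_cast ht
  have h2 : (0 : ℚ) < t.factorial := by exact_mod_cast t.factorial_pos
  have h3 : (t : ℚ) ^ t < ((t : ℚ) + 1) ^ t :=
    pow_lt_pow_left₀ (by linarith) h1.le (by omega)
  exact div_lt_div_of_pos_left h2 (by positivity) h3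

lemma term_anti (a b : ℕ) (ha : 1 ≤ a) (hab : a ≤ b) : term b ≤ term a := by
  induction b, hab using Nat.le_induction with
  | base => exact le_rfl
  | succ n hn ih => exact (term_succ_lt n (by omega)).le.trans ih

lemma term_lt_one (t : ℕ) (ht : 1 < t) : term t < 1 := by
  have h1 := term_anti 2 t (by norm_num) ht
  have h2 : term 2 = 1 / 2 := by norm_num [term, Nat.factorial]
  rw [h2] at h1
  linarith

lemma prod_pos' (M : Multiset ℕ) (hM : ∀ t ∈ M, 1 < t) : 0 < (M.map term).prod := by
  induction M using Multiset.induction with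
  | empty => simp
  | cons a M ih =>
    rw [Multiset.map_cons, Multiset.prod_cons]
    exact mul_pos (term_pos a (hM a (by simp)).le)
      (ih fun t h => hM t (Multiset.mem_cons_of_mem h))

lemma prod_le_one' (M : Multiset ℕ) (hM : ∀ t ∈ M, 1 < t) : (M.map term).prod ≤ 1 := by
  induction M using Multiset.induction with
  | empty => simp
  | cons a M ih =>
    rw [Multiset.map_cons, Multiset.prod_cons]
    have hM' : ∀ t ∈ M, 1 < t := fun t h => hM t (Multiset.mem_cons_of_mem h)
    exact mul_le_one₀ (term_lt_one a (hM a (by simp))).le (prod_pos' M hM').le (ih hM')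

lemma prod_lt_one' (M : Multiset ℕ) (hM : ∀ t ∈ M, 1 < t) (h0 : M ≠ 0) :
    (M.map term).prod < 1 := by
  obtain ⟨a, ha⟩ := Multiset.exists_mem_of_ne_zero h0
  obtain ⟨N, rfl⟩ := Multiset.exists_cons_of_mem ha
  have hN : ∀ t ∈ N, 1 < t := fun t h => hM t (Multiset.mem_cons_of_mem h)
  rw [Multiset.map_cons, Multiset.prod_cons]
  have h1 := term_lt_one a (hM a ha)
  have h2 := prod_le_one' N hN
  have h3 := prod_pos' N hN
  nlinarith

/-- Elements `≤ r` only decrease the product, and each element `> r` contributes at most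
`term (r + 1)`. -/
lemma prod_le_pow (r : ℕ) (M : Multiset ℕ) (hM : ∀ t ∈ M, 1 < t) :
    (M.map term).prod ≤ term (r + 1) ^ (M.countP (r < ·)) := by
  induction M using Multiset.induction with
  | empty => simp
  | cons a M ih =>
    rw [Multiset.map_cons, Multiset.prod_cons]
    have hM' : ∀ t ∈ M, 1 < t := fun t h => hM t (Multiset.mem_cons_of_mem h)
    have ha := hM a (by simp)
    have h0 := prod_pos' M hM'
    have hr := term_pos (r + 1) (by omega)
    by_cases h : r < a
    · rw [Multiset.countP_cons_of_pos _ h, pow_succ, mul_comm]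
      exact mul_le_mul (ih hM') (term_anti _ _ (by omega) h) (term_pos a ha.le).le (by positivity)
    · rw [Multiset.countP_cons_of_neg _ h]
      refine le_trans ?_ (ih hM')
      exact mul_le_of_le_one_left h0.le (term_lt_one a ha).le

lemma pow_le_prod (r : ℕ) (M : Multiset ℕ) (hM : ∀ t ∈ M, 1 < t) (hr : ∀ t ∈ M, t ≤ r)
    (h1 : 1 ≤ r) : term r ^ M.card ≤ (M.map term).prod := by
  induction M using Multiset.induction with
  | empty => simp
  | cons a M ih =>
    have hM' : ∀ t ∈ M, 1 < t := fun t h => hM t (Multiset.mem_cons_of_mem h)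
    rw [Multiset.map_cons, Multiset.prod_cons, Multiset.card_cons, pow_succ, mul_comm]
    have ha := hM a (by simp)
    have := term_pos r h1
    exact mul_le_mul (term_anti _ _ ha.le (hr a (by simp)))
      (ih hM' fun t h => hr t (Multiset.mem_cons_of_mem h)) (by positivity) (term_pos a ha.le).le

lemma val_term (r t : ℕ) (hr : r.Prime) (ht : 1 < t) (h2 : t < 2 * r) :
    padicValRat r (term t) =
      (if r < t then 1 else 0) - ((r : ℤ) - 1) * (if t = r then 1 else 0) := by
  have := Fact.mk hr
  have hf : (t.factorial : ℚ) ≠ 0 := by exact_mod_cast t.factorial_ne_zero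
  have h0 : (t : ℚ) ≠ 0 := by
    have : t ≠ 0 := by omega
    exact_mod_cast this
  unfold term
  rw [padicValRat.div hf (pow_ne_zero _ h0), padicValRat.pow, padicValRat.of_nat,
    padicValRat.of_nat]
  have hfac : padicValNat r t.factorial = t / r := by
    rw [padicValNat_factorial (p := r) (n := t) (b := 2)]
    · simp
    · refine Nat.log_lt_of_lt_pow (by omega) ?_
      have := hr.two_le
      nlinarith
  rw [hfac]
  rcases lt_trichotomy t r with h | h | h
  · have hv : padicValNat r t = 0 :=
      padicValNat.eq_zero_of_not_dvd (Nat.not_dvd_of_pos_of_lt (by omega) h)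
    rw [hv, Nat.div_eq_of_lt h, if_neg (by omega), if_neg (by omega)]
    simp
  · subst h
    rw [Nat.div_self (by omega), padicValNat_self]
    simp
  · have hv : padicValNat r t = 0 := by
      apply padicValNat.eq_zero_of_not_dvd
      rintro ⟨c, rfl⟩
      have h3 : 1 < c := by by_contra hc; interval_cases c <;> omega
      nlinarith
    have hd : t / r = 1 := by
      rw [Nat.div_eq_iff hr.pos]; omega
    rw [hv, hd, if_pos h, if_neg (by omega)]
    simp

lemma val_prod (r : ℕ) (hr : r.Prime) (M : Multiset ℕ) (hM : ∀ t ∈ M, 1 < t)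
    (h2 : ∀ t ∈ M, t < 2 * r) :
    padicValRat r (M.map term).prod =
      (M.countP (r < ·) : ℤ) - ((r : ℤ) - 1) * (M.count r : ℤ) := by
  have := Fact.mk hr
  induction M using Multiset.induction with
  | empty => simp
  | cons a M ih =>
    have hM' : ∀ t ∈ M, 1 < t := fun t h => hM t (Multiset.mem_cons_of_mem h)
    have ha := hM a (by simp)
    rw [Multiset.map_cons, Multiset.prod_cons,
      padicValRat.mul (term_pos a ha.le).ne' (prod_pos' M hM').ne',
      ih hM' (fun t h => h2 t (Multiset.mem_cons_of_mem h)), val_term r a hr ha (h2 a (by simp)),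
      Multiset.countP_cons, Multiset.count_cons]
    simp only [eq_comm (a := r)]
    push_cast
    ring

lemma exists_large_prime (T : ℕ) (hT : 1 < T) :
    ∃ r, r.Prime ∧ r ≤ T ∧ T < 2 * r ∧ ∀ q, q.Prime → q ≤ T → q ≤ r := by
  have h2 : 2 ≤ T := hT
  refine ⟨Nat.findGreatest Nat.Prime T, Nat.findGreatest_spec h2 Nat.prime_two,
    Nat.findGreatest_le T, ?_, fun q hq hqT => Nat.le_findGreatest hqT hq⟩
  obtain ⟨q, hq, h1, h3⟩ := Nat.exists_prime_lt_and_le_two_mul (T / 2) (by omega)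
  have := Nat.le_findGreatest (P := Nat.Prime) (show q ≤ T by omega) hq
  omega

/-- The theorem for multisets; a set of distinct primes is encoded as a duplicate-free multiset. -/
lemma multiset_eq (c : ℕ) : ∀ (M S : Multiset ℕ), M.card = c → (∀ t ∈ M, 1 < t) → S.Nodup →
    (∀ q ∈ S, q.Prime) → (M.map term).prod = (S.map term).prod → M = S := by
  induction c with
  | zero =>
    intro M S hc hM hS hSp h
    rw [Multiset.card_eq_zero] at hc
    subst hc
    by_contra h0
    have := prod_lt_one' S (fun q hq => (hSp q hq).one_lt) (Ne.symm h0)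
    rw [← h] at this
    simp at this
  | succ c ih =>
    intro M S hc hM hS hSp h
    have hS1 : ∀ q ∈ S, 1 < q := fun q hq => (hSp q hq).one_lt
    have hM0 : M ≠ 0 := by rintro rfl; simp at hc
    have hmax : ∀ N : Multiset ℕ, N ≠ 0 → ∃ T ∈ N, ∀ t ∈ N, t ≤ T := by
      intro N hN
      obtain ⟨a, ha⟩ := Multiset.exists_mem_of_ne_zero hN
      obtain ⟨T, hT, hT2⟩ := N.toFinset.exists_max_image id ⟨a, by simpa using ha⟩
      exact ⟨T, by simpa using hT, fun t ht => hT2 t (by simpa using ht)⟩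
    obtain ⟨T, hTM, hT⟩ := hmax M hM0
    obtain ⟨r, hr, hrT, hT2, hrmax⟩ := exists_large_prime T (hM T hTM)
    have hr2 := hr.two_le
    have hST : ∀ q ∈ S, q ≤ T := by
      by_contra hcon
      push Not at hcon
      obtain ⟨q, hqS, hqT⟩ := hcon
      obtain ⟨P, hPS, hP⟩ := hmax S (by rintro rfl; simp at hqS)
      have hqP := hP q hqS
      have hPp := hSp P hPS
      have h1 := val_prod P hPp M hM (fun t ht => by have := hT t ht; omega)
      have h2 := val_prod P hPp S hS1 (fun t ht => by have := hP t ht; have := hPp.pos; omega)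
      have e1 : M.countP (P < ·) = 0 :=
        Multiset.countP_eq_zero.2 fun t ht => by have := hT t ht; omega
      have e2 : S.countP (P < ·) = 0 :=
        Multiset.countP_eq_zero.2 fun t ht => by have := hP t ht; omega
      have e3 : M.count P = 0 :=
        Multiset.count_eq_zero.2 fun ht => by have := hT P ht; omega
      have e4 : S.count P = 1 := Multiset.count_eq_one_of_mem hS hPS
      rw [h, h2, e1, e2, e3, e4] at h1
      have := hPp.two_le
      push_cast at h1
      omega
    have hSr : ∀ q ∈ S, q ≤ r := fun q hq => hrmax q (hSp q hq) (hST q hq)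
    have h1 := val_prod r hr M hM (fun t ht => by have := hT t ht; omega)
    have h2 := val_prod r hr S hS1 (fun t ht => by have := hST t ht; omega)
    have e2 : S.countP (r < ·) = 0 :=
      Multiset.countP_eq_zero.2 fun t ht => by have := hSr t ht; omega
    rw [h, h2, e2] at h1
    push_cast at h1
    by_cases h0 : M.countP (r < ·) = 0
    · have hTr : T = r := by
        have := Multiset.countP_eq_zero.1 h0 T hTM
        omega
      subst hTr
      have hcM : 0 < M.count T := Multiset.count_pos.2 hTM
      rw [h0] at h1
      have hTS : T ∈ S := by
        rw [← Multiset.count_pos]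
        have h5 : ((T : ℤ) - 1) * (S.count T : ℤ) = ((T : ℤ) - 1) * (M.count T : ℤ) := by
          push_cast at h1
          linarith
        have h6 := mul_left_cancel₀ (show (T : ℤ) - 1 ≠ 0 by omega) h5
        omega
      obtain ⟨M', rfl⟩ := Multiset.exists_cons_of_mem hTM
      obtain ⟨S', rfl⟩ := Multiset.exists_cons_of_mem hTS
      have := ih M' S' (by simpa using hc) (fun t ht => hM t (Multiset.mem_cons_of_mem ht))
        (Multiset.nodup_cons.1 hS).2 (fun t ht => hSp t (Multiset.mem_cons_of_mem ht)) (by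
          simp only [Multiset.map_cons, Multiset.prod_cons] at h
          exact mul_left_cancel₀ (term_pos T (by omega)).ne' h)
      rw [this]
    · exfalso
      have hdvd : ((r : ℤ) - 1) ∣ (M.countP (r < ·) : ℤ) :=
        ⟨(M.count r : ℤ) - (S.count r : ℤ), by linarith⟩
      have hle : (r : ℤ) - 1 ≤ (M.countP (r < ·) : ℤ) := Int.le_of_dvd (by omega) hdvd
      have hle' : r - 1 ≤ M.countP (r < ·) := by omega
      have hcard : S.card ≤ r - 1 := by
        have hsub : S ≤ (Finset.Icc 2 r).val :=
          (Multiset.le_iff_subset hS).2 fun q hq => by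
            simpa using ⟨hS1 q hq, hSr q hq⟩
        have := Multiset.card_le_card hsub
        simpa using this
      have b1 : (M.map term).prod ≤ term (r + 1) ^ (r - 1) :=
        (prod_le_pow r M hM).trans (pow_le_pow_of_le_one (term_pos _ (by omega)).le
          (term_lt_one _ (by omega)).le hle')
      have b2 : term r ^ (r - 1) ≤ (S.map term).prod :=
        (pow_le_pow_of_le_one (term_pos _ (by omega)).le
          (term_lt_one _ (by omega)).le hcard).trans (pow_le_prod r S hS1 hSr (by omega))
      have b3 : term (r + 1) ^ (r - 1) < term r ^ (r - 1) :=
        pow_lt_pow_left₀ (term_succ_lt r (by omega)) (term_pos _ (by omega)).le (by omega)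
      linarith

theorem stmt16 (n k : ℕ) (t : Fin n → ℕ) (ht : ∀ i, 1 < t i)
    (p : Fin k → ℕ) (hp : ∀ i, (p i).Prime) (hinj : Function.Injective p)
    (heq : ∏ i, ((t i).factorial : ℚ) / (t i : ℚ) ^ t i
         = ∏ i, ((p i).factorial : ℚ) / (p i : ℚ) ^ p i) :
    n = k ∧ ∃ e : Fin n ≃ Fin k, ∀ i, t i = p (e i) := by
  have key : Finset.univ.val.map t = Finset.univ.val.map p := by
    refine multiset_eq _ _ _ rfl ?_ (Multiset.Nodup.map hinj Finset.univ.nodup) ?_ ?_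
    · intro x hx
      obtain ⟨i, -, rfl⟩ := Multiset.mem_map.1 hx
      exact ht i
    · intro x hx
      obtain ⟨i, -, rfl⟩ := Multiset.mem_map.1 hx
      exact hp i
    · rw [Multiset.map_map, Multiset.map_map]
      exact heq
  have hnk : n = k := by simpa using congrArg Multiset.card key
  subst hnk
  have hmem : ∀ i, ∃ j, p j = t i := fun i => by
    have : t i ∈ Finset.univ.val.map t := Multiset.mem_map_of_mem t (Finset.mem_univ i)
    rw [key] at this
    obtain ⟨j, -, hj⟩ := Multiset.mem_map.1 this
    exact ⟨j, hj⟩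
  choose g hg using hmem
  have hnd : (Finset.univ.val.map t).Nodup := key ▸ Multiset.Nodup.map hinj Finset.univ.nodup
  have hginj : Function.Injective g := fun i j hij =>
    Multiset.inj_on_of_nodup_map hnd i (Finset.mem_univ i) j (Finset.mem_univ j)
      (by rw [← hg i, ← hg j, hij])
  exact ⟨rfl, Equiv.ofBijective g (Finite.injective_iff_bijective.1 hginj), fun i => (hg i).symm⟩
end

section
/- There exists no finite group G such that tp(G) = (p!/p^p) · (q!/q^q) for primes p < q. -/
/-!
Write `f k = k! / k ^ k`. The left and right cosets of `H` inside a double coset `HgH` meet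
pairwise in equally many elements, and there are `k` of each, where `k` is the length of the
`H`-orbit of `gH` in `G ⧸ H`. Hence `P_G(H)` is the product of `f k` over the orbits of `H` on
`G ⧸ H` (`transProb_eq_prod`).

Suppose the minimum `f p * f q` is attained at `H`. Comparing `q`-adic and `p`-adic valuations, and
using that `f` is decreasing with `f (2q) ≤ f q ^ 2`, exactly one orbit has length `p`, exactly one
has length `q`, and all others are points (`lengths_of_prod_subF`).

Let `C` be the orbit of length `q` and `M` its setwise stabilizer in `G`. If `gH ∉ C`, then the
stabilizer of `gH` in `H` has index `1` or `p`, coprime to `q`, so it is still transitive on `C`;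
this puts `C` inside a single orbit of `gHg⁻¹`, which must be `gC`, so `g ∈ M`. Thus the complement
of `C` is the `M`-orbit of `H` (`mem_stabilizer_orbit_iff`). Its length `|M : H|` divides
`|G : H| = |M : H| + q`, hence equals `q`. It is also `m + p`, where `m = |N(H) : H|` is the number
of fixed points of `H`; as `N(H) ≤ M`, `m` divides `q`, so `m = 1` and `q = p + 1`, i.e. `p = 2` and
`q = 3` (`structure_of_lengths`).

In this case `f 2 * f 3 = 1/9` and `G` permutes two blocks of size three. Let `K` be the pointwise
stabilizer of the block `C`. For `g ∉ M`, `K ∩ gKg⁻¹` fixes all of `G ⧸ H`, and an order count gives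
`|K : K ∩ gKg⁻¹| ≥ 3`. Either some such index is at least `4`, or there are at least two double
cosets of `K` outside `M`; so `P_G(K) ≤ max (f 4) (f 3 ^ 2) < 1/9` (`exists_small`), contradicting
minimality.
-/

open scoped Pointwise Classical

/-! ### The numbers `k! / k ^ k` -/

/-- The factor `k! / k ^ k` contributed by a suborbit of length `k`. -/
noncomputable def subF (k : ℕ) : ℚ := (k.factorial : ℚ) / (k : ℚ) ^ k

lemma subF_pos (k : ℕ) : 0 < subF k := by
  unfold subF
  rcases Nat.eq_zero_or_pos k with rfl | h
  · simp
  · have := k.factorial_pos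
    positivity

lemma subF_one : subF 1 = 1 := by simp [subF]

lemma subF_succ_lt {k : ℕ} (hk : 1 ≤ k) : subF (k + 1) < subF k := by
  unfold subF
  have hk0 : (0 : ℚ) < k := by exact_mod_cast hk
  have hpow : (k : ℚ) ^ k < ((k : ℚ) + 1) ^ k :=
    pow_lt_pow_left₀ (by linarith) hk0.le (by omega)
  have hfac : (0 : ℚ) < k.factorial := by exact_mod_cast k.factorial_pos
  rw [Nat.factorial_succ, div_lt_div_iff₀ (by positivity) (by positivity)]
  push_cast
  rw [pow_succ]
  have : 0 < (k.factorial : ℚ) * (k + 1) := by positivity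
  nlinarith

lemma subF_lt {a b : ℕ} (ha : 1 ≤ a) (hab : a < b) : subF b < subF a := by
  induction b, hab using Nat.le_induction with
  | base => exact subF_succ_lt ha
  | succ n hn ih => exact (subF_succ_lt (by omega)).trans ih

lemma subF_anti {a b : ℕ} (ha : 1 ≤ a) (hab : a ≤ b) : subF b ≤ subF a := by
  rcases hab.eq_or_lt with rfl | h
  · exact le_rfl
  · exact (subF_lt ha h).le

lemma subF_le_one {k : ℕ} (hk : 1 ≤ k) : subF k ≤ 1 :=
  subF_one ▸ subF_anti le_rfl hk

/-- This is `C(2k, k) ≤ 4 ^ k` in disguise. -/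
lemma subF_two_mul_le {k : ℕ} (hk : 1 ≤ k) : subF (2 * k) ≤ subF k * subF k := by
  have h1 : (2 * k).choose k * k.factorial * k.factorial = (2 * k).factorial := by
    have := Nat.choose_mul_factorial_mul_factorial (show k ≤ 2 * k by omega)
    rwa [show 2 * k - k = k by omega] at this
  have h2 : ((2 * k).choose k : ℚ) ≤ 2 ^ (2 * k) := by
    exact_mod_cast Nat.choose_le_two_pow (2 * k) k
  have hk0 : (0 : ℚ) < k := by exact_mod_cast hk
  unfold subF
  rw [← h1, div_mul_div_comm, div_le_div_iff₀ (by positivity) (by positivity)]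
  push_cast
  rw [mul_pow, ← pow_add, ← two_mul]
  have : (0 : ℚ) ≤ k.factorial * k.factorial * (k : ℚ) ^ (2 * k) := by positivity
  nlinarith [mul_le_mul_of_nonneg_right h2 this]

/-- If a product of factors `subF (k i)` has `r`-adic valuation at most that of `subF r`, then `r`
divides one of the `k i`: otherwise `r ^ r` would divide `r!`. -/
lemma exists_dvd_of_prod_subF {ι : Type*} (s : Finset ι) (k : ι → ℕ) (hk : ∀ i ∈ s, 1 ≤ k i)
    {r u v : ℕ} (hr : r.Prime) (hu : ¬ r ∣ u) (hv : 0 < v)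
    (h : ∏ i ∈ s, subF (k i) = subF r * ((u : ℚ) / v)) : ∃ i ∈ s, r ∣ k i := by
  by_contra! hcon
  have hr0 : (0 : ℚ) < r := by exact_mod_cast hr.pos
  have hv0 : (0 : ℚ) < v := by exact_mod_cast hv
  have hprod : (∏ i ∈ s, ((k i : ℚ) ^ k i)) ≠ 0 :=
    Finset.prod_ne_zero_iff.2 fun i hi => by
      have := hk i hi
      positivity
  unfold subF at h
  rw [Finset.prod_div_distrib, div_mul_div_comm, div_eq_div_iff hprod (by positivity)] at h
  have hN : (∏ i ∈ s, (k i).factorial) * (r ^ r * v) =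
      r.factorial * u * ∏ i ∈ s, k i ^ k i := by exact_mod_cast h
  have hcop : r.Coprime (u * ∏ i ∈ s, k i ^ k i) := by
    refine Nat.Coprime.mul_right ((Nat.Prime.coprime_iff_not_dvd hr).2 hu) ?_
    exact Nat.Coprime.prod_right fun i hi =>
      Nat.Coprime.pow_right _ ((Nat.Prime.coprime_iff_not_dvd hr).2 (hcon i hi))
  have hdvd : r ^ 2 ∣ r.factorial := by
    have h1 : r ^ 2 ∣ r.factorial * (u * ∏ i ∈ s, k i ^ k i) := by
      rw [← mul_assoc, ← hN]
      exact Dvd.dvd.mul_left (Dvd.dvd.mul_right (pow_dvd_pow r hr.two_le) _) _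
    exact (Nat.Coprime.pow_left 2 hcop).dvd_of_dvd_mul_right h1
  obtain ⟨m, rfl⟩ : ∃ m, r = m + 1 := ⟨r - 1, by have := hr.pos; omega⟩
  rw [Nat.factorial_succ, pow_two] at hdvd
  have h3 := Nat.dvd_of_mul_dvd_mul_left (Nat.succ_pos m) hdvd
  have := (Nat.Prime.dvd_factorial hr).1 h3
  omega

/-- The value `subF p * subF q` determines the multiset of lengths, up to ones. -/
lemma lengths_of_prod_subF {ι : Type*} [Fintype ι] (k : ι → ℕ) (hk : ∀ i, 1 ≤ k i)
    {p q : ℕ} (hp : p.Prime) (hq : q.Prime) (hpq : p < q)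
    (h : ∏ i, subF (k i) = subF p * subF q) :
    ∃ i j, i ≠ j ∧ k i = p ∧ k j = q ∧ ∀ l, l ≠ i → l ≠ j → k l = 1 := by
  have hle : ∀ (s : Finset ι), ∀ i ∈ s, ∏ i ∈ s, subF (k i) ≤ subF (k i) := by
    intro s i hi
    rw [← Finset.mul_prod_erase s _ hi]
    exact mul_le_of_le_one_right (subF_pos _).le
      (Finset.prod_le_one (fun _ _ => (subF_pos _).le) fun _ _ => subF_le_one (hk _))
  have hp1 := hp.pos
  have hq1 := hq.pos
  obtain ⟨j, -, hj⟩ := exists_dvd_of_prod_subF Finset.univ k (fun i _ => hk i) hq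
    (u := p.factorial) (v := p ^ p) (by rw [hq.dvd_factorial]; omega) (by positivity)
    (by rw [h, mul_comm, subF, subF]; push_cast; rfl)
  have hjq : k j = q := by
    obtain ⟨c, hc⟩ := hj
    have h0 := hk j
    have hc0 : c ≠ 0 := by rintro rfl; omega
    by_contra hne
    have hc2 : 2 ≤ c := by
      rcases Nat.lt_or_ge c 2 with h2 | h2
      · interval_cases c <;> omega
      · exact h2
    have h1 := hle Finset.univ j (Finset.mem_univ _)
    rw [h] at h1
    have h2 : subF (k j) ≤ subF (2 * q) := subF_anti (by omega) (by rw [hc]; nlinarith)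
    have h3 := subF_two_mul_le hq1
    have h4 := subF_lt hp1 hpq
    have := subF_pos q
    nlinarith
  have h1 : ∏ i ∈ Finset.univ.erase j, subF (k i) = subF p := by
    rw [← Finset.mul_prod_erase _ _ (Finset.mem_univ j), hjq, mul_comm] at h
    exact mul_right_cancel₀ (subF_pos q).ne' h
  obtain ⟨i, hi, hpi⟩ := exists_dvd_of_prod_subF (Finset.univ.erase j) k (fun i _ => hk i) hp
    (u := 1) (v := 1) (by simpa using hp.ne_one) one_pos (by simpa using h1)
  have hip : k i = p := by
    refine le_antisymm ?_ (Nat.le_of_dvd (hk i) hpi)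
    by_contra hlt
    have h2 := hle _ i hi
    rw [h1] at h2
    exact absurd (subF_lt hp1 (not_le.1 hlt)) (not_lt.2 h2)
  have h2 : ∏ l ∈ (Finset.univ.erase j).erase i, subF (k l) = 1 := by
    rw [← Finset.mul_prod_erase _ _ hi, hip] at h1
    exact mul_left_cancel₀ (subF_pos p).ne' (by rw [h1, mul_one])
  refine ⟨i, j, (Finset.mem_erase.1 hi).1, hip, hjq, fun l hli hlj => ?_⟩
  have h3 := hle _ l (by simp [hli, hlj] : l ∈ (Finset.univ.erase j).erase i)
  rw [h2] at h3
  by_contra hne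
  have h4 := subF_lt le_rfl (show 1 < k l by have := hk l; omega)
  rw [subF_one] at h4
  linarith

/-! ### Counting common transversals -/

/-- The length of an `H`-orbit on `G ⧸ H`. -/
noncomputable def orbLen {G : Type*} [Group G] {H : Subgroup G}
    (w : MulAction.orbitRel.Quotient H (G ⧸ H)) : ℕ :=
  Nat.card {x : G ⧸ H // (Quotient.mk'' x : MulAction.orbitRel.Quotient H (G ⧸ H)) = w}

section Count

variable {G : Type*} [Group G]

/-- The `H`-orbit of a point of `G ⧸ H`; this amounts to the double coset of a representative. -/
abbrev orbOf (H : Subgroup G) (x : G ⧸ H) : MulAction.orbitRel.Quotient H (G ⧸ H) :=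
  Quotient.mk'' x

lemma sub_smul_mk {H : Subgroup G} (u : H) (b : G) :
    u • (b : G ⧸ H) = ((u * b : G) : G ⧸ H) := rfl

lemma orbOf_eq_iff {H : Subgroup G} {x y : G ⧸ H} :
    orbOf H x = orbOf H y ↔ x ∈ MulAction.orbit H y := by
  rw [Quotient.eq'', MulAction.orbitRel_apply]

lemma orbLen_orbOf (H : Subgroup G) (x : G ⧸ H) :
    orbLen (orbOf H x) = (MulAction.orbit H x).ncard := by
  rw [orbLen, ← Nat.card_coe_set_eq]
  exact Nat.card_congr (Equiv.subtypeEquivRight fun y => orbOf_eq_iff)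

lemma orbLen_pos [Finite G] {H : Subgroup G} (w : MulAction.orbitRel.Quotient H (G ⧸ H)) :
    1 ≤ orbLen w := by
  induction w using Quotient.inductionOn' with
  | h x =>
    have : Nonempty {y : G ⧸ H // orbOf H y = orbOf H x} := ⟨⟨x, rfl⟩⟩
    exact Nat.card_pos

/-- The orbit paired with that of `x`: if `x = aH`, it is the `H`-orbit of `a⁻¹H`. -/
noncomputable def pairedOrb (H : Subgroup G) (x : G ⧸ H) : MulAction.orbitRel.Quotient H (G ⧸ H) :=
  orbOf H ((x.out⁻¹ : G) : G ⧸ H)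

lemma pairedOrb_mk (H : Subgroup G) (a : G) :
    pairedOrb H (a : G ⧸ H) = orbOf H ((a⁻¹ : G) : G ⧸ H) := by
  obtain ⟨h, hh⟩ := QuotientGroup.mk_out_eq_mul H a
  rw [pairedOrb, hh, orbOf_eq_iff]
  exact ⟨h⁻¹, by simp [sub_smul_mk]⟩

/-- The elements `g` with `gH = aH` and `g⁻¹H = y` correspond to the elements `a⁻¹g` of `H`
moving `y` to `a⁻¹H`; these form a coset of a point stabilizer in `H` if `y`
lies in the orbit paired with that of `aH`, and there are none otherwise. -/
lemma card_cell [Finite G] (H : Subgroup G) (x y : G ⧸ H) :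
    Nat.card {g : G // (g : G ⧸ H) = x ∧ ((g⁻¹ : G) : G ⧸ H) = y} =
      if orbOf H y = pairedOrb H x then Nat.card H / orbLen (orbOf H y) else 0 := by
  induction x using QuotientGroup.induction_on with
  | H a =>
  rw [pairedOrb_mk]
  split_ifs with hy
  · rw [orbOf_eq_iff] at hy
    obtain ⟨h₀, hh₀⟩ := hy
    have e : {g : G // (g : G ⧸ H) = a ∧ ((g⁻¹ : G) : G ⧸ H) = y} ≃
        MulAction.stabilizer H y :=
      { toFun := fun g => ⟨h₀ * ⟨a⁻¹ * g, QuotientGroup.eq.1 g.2.1.symm⟩, by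
          rw [MulAction.mem_stabilizer_iff, mul_smul]
          have h1 : (⟨a⁻¹ * g, QuotientGroup.eq.1 g.2.1.symm⟩ : H) • y =
              ((a⁻¹ : G) : G ⧸ H) := by
            refine (congrArg (_ • ·) g.2.2.symm).trans ?_
            simp [sub_smul_mk]
          rw [h1]; exact hh₀⟩
        invFun := fun u => ⟨a * ((h₀⁻¹ * u.1 : H) : G), by
          rw [eq_comm, QuotientGroup.eq, inv_mul_cancel_left]
          exact (h₀⁻¹ * u.1).2, by
          have h2 : u.1⁻¹ • y = y := MulAction.mem_stabilizer_iff.1 (inv_mem u.2)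
          have h3 : (((a * ((h₀⁻¹ * u.1 : H) : G))⁻¹ : G) : G ⧸ H) =
              u.1⁻¹ • h₀ • ((a⁻¹ : G) : G ⧸ H) := by
            simp [sub_smul_mk, mul_assoc]
          rw [h3]
          exact (congrArg (u.1⁻¹ • ·) hh₀).trans h2⟩
        left_inv := fun g => by ext; simp
        right_inv := fun u => by ext; simp }
    rw [Nat.card_congr e, orbLen_orbOf, ← MulAction.index_stabilizer,
      ← Subgroup.card_mul_index (MulAction.stabilizer H y), Nat.mul_div_cancel]
    exact Nat.pos_of_ne_zero Subgroup.index_ne_zero_of_finite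
  · rw [Nat.card_eq_zero]
    left
    refine ⟨fun g => hy ?_⟩
    rw [← g.2.2, ← pairedOrb_mk, g.2.1, pairedOrb_mk]

/-- Sections of `G → G ⧸ H` the inverses of whose values again represent every coset once
are the same as common transversals; the bijection sends a section to its range. -/
lemma numDT_eq_card_sections (H : Subgroup G) :
    numDT H H = Nat.card {s : G ⧸ H → G //
      (∀ x, (s x : G ⧸ H) = x) ∧ Function.Bijective fun x => (((s x)⁻¹ : G) : G ⧸ H)} := by
  have key : ∀ T : Set G, IsDoubleTransversal H H T ↔
      (∀ x : G ⧸ H, ∃! t, t ∈ T ∧ (t : G ⧸ H) = x) ∧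
      (∀ x : G ⧸ H, ∃! t, t ∈ T ∧ ((t⁻¹ : G) : G ⧸ H) = x) := by
    intro T
    refine and_congr ⟨fun h x => ?_, fun h g => ?_⟩ ⟨fun h x => ?_, fun h g => ?_⟩
    · induction x using QuotientGroup.induction_on with
      | H a => simpa only [eq_comm (b := (a : G ⧸ H)), QuotientGroup.eq] using h a
    · simpa only [eq_comm (b := (g : G ⧸ H)), QuotientGroup.eq] using h g
    · induction x using QuotientGroup.induction_on with
      | H a => simpa only [QuotientGroup.eq, inv_inv] using h a⁻¹
    · simpa only [QuotientGroup.eq, inv_inv] using h (g⁻¹ : G)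
  rw [numDT]
  have hrange : ∀ s : {s : G ⧸ H → G // (∀ x, (s x : G ⧸ H) = x) ∧
      Function.Bijective fun x => (((s x)⁻¹ : G) : G ⧸ H)},
      IsDoubleTransversal H H (Set.range s.1) := by
    rintro ⟨s, hs, hb⟩
    rw [key]
    refine ⟨fun x => ⟨s x, ⟨⟨x, rfl⟩, hs x⟩, ?_⟩, fun y => ?_⟩
    · rintro _ ⟨⟨z, rfl⟩, hz⟩
      rw [hs] at hz
      rw [hz]
    · obtain ⟨x, hx⟩ := hb.2 y
      refine ⟨s x, ⟨⟨x, rfl⟩, hx⟩, ?_⟩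
      rintro _ ⟨⟨z, rfl⟩, hz⟩
      rw [hb.1 (hz.trans hx.symm)]
  refine (Nat.card_congr (Equiv.ofBijective (fun s => ⟨Set.range s.1, hrange s⟩) ⟨?_, ?_⟩)).symm
  · rintro ⟨s, hs, hb⟩ ⟨s', hs', hb'⟩ h
    have h1 : Set.range s = Set.range s' := congrArg Subtype.val h
    ext x
    obtain ⟨z, hz⟩ : s x ∈ Set.range s' := h1 ▸ ⟨x, rfl⟩
    have h2 : z = x := by rw [← hs x, ← hz, hs']
    simp only
    rw [← hz, h2]
  · rintro ⟨T, hT⟩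
    obtain ⟨h1, h2⟩ := (key T).1 hT
    choose s hs hu using h1
    have hsT : ∀ t ∈ T, s (t : G ⧸ H) = t := fun t ht => (hu _ t ⟨ht, rfl⟩).symm
    refine ⟨⟨s, fun x => (hs x).2, fun x x' hx => ?_, fun y => ?_⟩, ?_⟩
    · have h3 := (h2 _).unique ⟨(hs x).1, rfl⟩ ⟨(hs x').1, hx.symm⟩
      rw [← (hs x).2, h3, (hs x').2]
    · obtain ⟨t, ⟨ht, hty⟩, -⟩ := h2 y
      exact ⟨(t : G ⧸ H), by simp only [hsT t ht, hty]⟩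
    · ext t
      simp only [Set.mem_range]
      exact ⟨by rintro ⟨x, rfl⟩; exact (hs x).1, fun ht => ⟨_, hsT t ht⟩⟩

/-- The number of common transversals is the permanent of the matrix of intersection sizes
`|aH ∩ Hb⁻¹|`, with rows and columns indexed by `G ⧸ H`. -/
lemma numDT_eq_sum [Finite G] (H : Subgroup G) [Fintype (G ⧸ H)] :
    numDT H H = ∑ σ : Equiv.Perm (G ⧸ H), ∏ x,
      Nat.card {g : G // (g : G ⧸ H) = x ∧ ((g⁻¹ : G) : G ⧸ H) = σ x} := by
  have e : {s : G ⧸ H → G //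
      (∀ x, (s x : G ⧸ H) = x) ∧ Function.Bijective fun x => (((s x)⁻¹ : G) : G ⧸ H)} ≃
      Σ σ : Equiv.Perm (G ⧸ H),
        ∀ x, {g : G // (g : G ⧸ H) = x ∧ ((g⁻¹ : G) : G ⧸ H) = σ x} :=
    { toFun := fun s => ⟨Equiv.ofBijective _ s.2.2, fun x => ⟨s.1 x, s.2.1 x, rfl⟩⟩
      invFun := fun t => ⟨fun x => (t.2 x).1, fun x => (t.2 x).2.1, by
        have : (fun x => (((t.2 x).1⁻¹ : G) : G ⧸ H)) = t.1 := funext fun x => (t.2 x).2.2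
        rw [this]
        exact t.1.bijective⟩
      left_inv := fun s => rfl
      right_inv := fun t => by
        obtain ⟨σ, t⟩ := t
        have hσ : ∀ x, (((t x).1⁻¹ : G) : G ⧸ H) = σ x := fun x => (t x).2.2
        refine Sigma.ext (Equiv.ext hσ) ?_
        refine Function.hfunext rfl fun x y hxy => ?_
        obtain rfl := eq_of_heq hxy
        refine (Subtype.heq_iff_coe_eq fun g => ?_).2 rfl
        simp [hσ] }
  rw [numDT_eq_card_sections, Nat.card_congr e, Nat.card_sigma]
  exact Finset.sum_congr rfl fun σ _ => Nat.card_pi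

/-- Paired orbits have the same length. -/
lemma orbLen_pairedOrb [Finite G] (H : Subgroup G) (x : G ⧸ H) :
    orbLen (pairedOrb H x) = orbLen (orbOf H x) := by
  induction x using QuotientGroup.induction_on with
  | H a =>
  have hst : ∀ b : G, Nat.card (MulAction.stabilizer H (b : G ⧸ H)) *
      orbLen (orbOf H (b : G ⧸ H)) = Nat.card H := fun b => by
    rw [orbLen_orbOf, ← MulAction.index_stabilizer, Subgroup.card_mul_index]
  have hmem : ∀ (b : G) (u : H), u ∈ MulAction.stabilizer H (b : G ⧸ H) ↔
      b⁻¹ * (u : G) * b ∈ H := fun b u => by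
    rw [MulAction.mem_stabilizer_iff, sub_smul_mk, eq_comm, QuotientGroup.eq, mul_assoc]
  have e : MulAction.stabilizer H (a : G ⧸ H) ≃
      MulAction.stabilizer H ((a⁻¹ : G) : G ⧸ H) :=
    { toFun := fun u => ⟨⟨a⁻¹ * u.1 * a, (hmem a u.1).1 u.2⟩, (hmem _ _).2 (by
        simp [mul_assoc])⟩
      invFun := fun u => ⟨⟨a * u.1 * a⁻¹, by simpa using (hmem _ u.1).1 u.2⟩, (hmem _ _).2 (by
        simp [mul_assoc])⟩
      left_inv := fun u => by ext; simp [mul_assoc]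
      right_inv := fun u => by ext; simp [mul_assoc] }
  rw [pairedOrb_mk]
  have h1 := hst a
  have h2 := hst a⁻¹
  rw [← Nat.card_congr e, ← h1] at h2
  exact Nat.eq_of_mul_eq_mul_left Nat.card_pos h2

/-- Some permutation of `G ⧸ H` carries every point into the orbit paired with its own. -/
lemma exists_perm_paired [Finite G] (H : Subgroup G) :
    ∃ σ : Equiv.Perm (G ⧸ H), ∀ x, orbOf H (σ x) = pairedOrb H x := by
  have hfib : ∀ w : MulAction.orbitRel.Quotient H (G ⧸ H),
      Nonempty ({x : G ⧸ H // pairedOrb H x = w} ≃ {x : G ⧸ H // orbOf H x = w}) := by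
    intro w
    induction w using Quotient.inductionOn' with
    | h y =>
    induction y using QuotientGroup.induction_on with
    | H b =>
    refine Finite.card_eq.1 ?_
    change _ = orbLen (orbOf H (b : G ⧸ H))
    rw [← orbLen_pairedOrb, pairedOrb_mk, orbLen]
    refine Nat.card_congr (Equiv.subtypeEquivRight fun x => ?_)
    induction x using QuotientGroup.induction_on with
    | H a =>
    change pairedOrb H a = orbOf H b ↔ orbOf H a = orbOf H (b⁻¹ : G)
    -- Both conditions say that `a⁻¹ ∈ H b H`.
    have hflip : ∀ c d : G, orbOf H (c : G ⧸ H) = orbOf H (d : G ⧸ H) →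
        orbOf H ((c⁻¹ : G) : G ⧸ H) = orbOf H ((d⁻¹ : G) : G ⧸ H) := by
      intro c d h
      rw [← pairedOrb_mk, ← pairedOrb_mk]
      rw [orbOf_eq_iff] at h
      obtain ⟨u, hu⟩ := h
      have hu' : ((u * d : G) : G ⧸ H) = c := hu
      rw [← hu', pairedOrb_mk, pairedOrb_mk]
      congr 1
      simp
    rw [pairedOrb_mk]
    exact ⟨fun h => by simpa using hflip _ _ h, fun h => by simpa using hflip _ _ h⟩
  refine ⟨(Equiv.sigmaFiberEquiv (pairedOrb H)).symm.trans
    ((Equiv.sigmaCongrRight fun w => (hfib w).some).trans (Equiv.sigmaFiberEquiv (orbOf H))), ?_⟩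
  intro x
  exact ((hfib (pairedOrb H x)).some ⟨x, rfl⟩).2

/-- `P_G(H)` is the product of `k! / k ^ k` over the suborbit lengths `k`. -/
theorem transProb_eq_prod [Finite G] (H : Subgroup G)
    [Fintype (MulAction.orbitRel.Quotient H (G ⧸ H))] :
    transProb H H = ∏ w : MulAction.orbitRel.Quotient H (G ⧸ H), subF (orbLen w) := by
  have : Fintype (G ⧸ H) := Fintype.ofFinite _
  obtain ⟨σ₀, hσ₀⟩ := exists_perm_paired H
  have hfiber : ∀ w : MulAction.orbitRel.Quotient H (G ⧸ H),
      (Finset.univ.filter fun x => orbOf H x = w).card = orbLen w := fun w => by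
    rw [orbLen, Nat.card_eq_fintype_card, Fintype.card_subtype]
  have hprod : ∀ F : MulAction.orbitRel.Quotient H (G ⧸ H) → ℚ,
      ∏ x, F (orbOf H x) = ∏ w, F w ^ orbLen w := by
    intro F
    rw [← Finset.prod_fiberwise Finset.univ (orbOf H)]
    refine Finset.prod_congr rfl fun w _ => ?_
    rw [← hfiber, ← Finset.prod_const]
    exact Finset.prod_congr rfl fun x hx => by rw [(Finset.mem_filter.1 hx).2]
  have hterm : ∀ σ : Equiv.Perm (G ⧸ H),
      (∏ x, Nat.card {g : G // (g : G ⧸ H) = x ∧ ((g⁻¹ : G) : G ⧸ H) = σ x}) =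
      if orbOf H ∘ (σ * σ₀⁻¹ : Equiv.Perm (G ⧸ H)) = orbOf H then
        ∏ x, Nat.card H / orbLen (orbOf H x) else 0 := by
    intro σ
    simp only [card_cell]
    split_ifs with h
    · have h' : ∀ x, orbOf H (σ x) = pairedOrb H x := fun x => by
        rw [← hσ₀]
        simpa using congrFun h (σ₀ x)
      rw [← Equiv.prod_comp σ fun y => Nat.card H / orbLen (orbOf H y)]
      exact Finset.prod_congr rfl fun x _ => if_pos (h' x)
    · by_contra hne
      refine h (funext fun y => ?_)
      have hx := Finset.prod_ne_zero_iff.1 hne (σ₀.symm y) (Finset.mem_univ _)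
      have hx' : orbOf H (σ (σ₀.symm y)) = pairedOrb H (σ₀.symm y) := by
        by_contra hc
        exact hx (if_neg hc)
      simpa [← hσ₀] using hx'
  have hcount : numDT H H = (∏ w : MulAction.orbitRel.Quotient H (G ⧸ H), (orbLen w).factorial) *
      ∏ x, Nat.card H / orbLen (orbOf H x) := by
    have hre := Equiv.sum_comp (Equiv.mulRight σ₀⁻¹) fun τ : Equiv.Perm (G ⧸ H) =>
      if orbOf H ∘ τ = orbOf H then ∏ x, Nat.card H / orbLen (orbOf H x) else 0
    simp only [Equiv.coe_mulRight] at hre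
    rw [numDT_eq_sum, Finset.sum_congr rfl fun σ _ => hterm σ]
    refine Eq.trans (by congr!) (hre.trans ?_)
    rw [← Finset.sum_filter, Finset.sum_const, smul_eq_mul]
    congr 1
    rw [← Fintype.card_subtype]
    convert DomMulAct.stabilizer_card (orbOf H) using 1
    refine Finset.prod_congr rfl fun w _ => ?_
    rw [orbLen, Nat.card_eq_fintype_card]
  have hdvd : ∀ x : G ⧸ H, orbLen (orbOf H x) ∣ Nat.card H := fun x => by
    rw [orbLen_orbOf, ← MulAction.index_stabilizer]
    exact Subgroup.index_dvd_card _
  have hH0 : (Nat.card H : ℚ) ≠ 0 := by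
    exact_mod_cast Nat.card_pos.ne'
  have hindex : (Nat.card H : ℚ) ^ H.index = ∏ _x : G ⧸ H, (Nat.card H : ℚ) := by
    rw [Finset.prod_const, Finset.card_univ, ← Nat.card_eq_fintype_card]
    rfl
  have hcast : ((∏ x, Nat.card H / orbLen (orbOf H x) : ℕ) : ℚ) =
      ∏ x, ((Nat.card H : ℚ) / (orbLen (orbOf H x) : ℚ)) := by
    rw [Nat.cast_prod]
    refine Finset.prod_congr rfl fun x _ => Nat.cast_div (hdvd x) ?_
    exact_mod_cast Nat.one_le_iff_ne_zero.1 (orbLen_pos (orbOf H x))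
  rw [transProb, hcount, hindex, Nat.cast_mul, hcast, mul_div_assoc, ← Finset.prod_div_distrib]
  have h1 : ∀ x : G ⧸ H, (Nat.card H : ℚ) / (orbLen (orbOf H x) : ℚ) / (Nat.card H : ℚ) =
      (fun w => ((orbLen w : ℚ))⁻¹) (orbOf H x) := fun x => by
    field_simp
  rw [Finset.prod_congr rfl fun x _ => h1 x, hprod fun w => ((orbLen w : ℚ))⁻¹,
    Nat.cast_prod, ← Finset.prod_mul_distrib]
  exact Finset.prod_congr rfl fun w _ => by rw [subF, inv_pow, div_eq_mul_inv]

end Count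

/-! ### Groups with suborbit lengths `1, …, 1, p, q` -/

section Structure

variable {G : Type*} [Group G]

lemma sub_smul_eq {H : Subgroup G} (K : Subgroup G) (u : K) (x : G ⧸ H) :
    u • x = (u : G) • x := by
  induction x using QuotientGroup.induction_on with
  | H a => rfl

/-- If a point stabilizer `A` of `H` has index coprime to the length of an orbit of `H`, then `A`
is still transitive on that orbit. -/
lemma exists_smul_of_coprime [Finite G] (H : Subgroup G) {x c y : G ⧸ H}
    (hcop : (MulAction.orbit H c).ncard.Coprime (MulAction.orbit H x).ncard)
    (hy : y ∈ MulAction.orbit H c) : ∃ u : H, u • x = x ∧ u • c = y := by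
  set A := MulAction.stabilizer H x with hA
  set B := MulAction.stabilizer H c with hB
  have hAi : A.index = (MulAction.orbit H x).ncard := MulAction.index_stabilizer _ _
  have hBi : B.index = (MulAction.orbit H c).ncard := MulAction.index_stabilizer _ _
  have h1 : B.relIndex A * A.index = (B ⊓ A).index := by
    rw [← Subgroup.inf_relIndex_right, Subgroup.relIndex_mul_index inf_le_right]
  have h2 : B.index ∣ B.relIndex A := by
    have : B.index ∣ B.relIndex A * A.index := h1 ▸ Subgroup.index_dvd_of_le inf_le_left
    exact (hBi ▸ hAi ▸ hcop : B.index.Coprime A.index).dvd_of_dvd_mul_right this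
  have h3 : (MulAction.stabilizer A c).index = B.relIndex A := rfl
  have h4 : MulAction.orbit A c = MulAction.orbit H c := by
    refine Set.eq_of_subset_of_ncard_le ?_ ?_ (Set.toFinite _)
    · rintro _ ⟨u, rfl⟩
      exact ⟨u.1, rfl⟩
    · rw [← MulAction.index_stabilizer A c, h3, ← hBi]
      exact Nat.le_of_dvd (Nat.pos_of_ne_zero
        (Subgroup.index_ne_zero_of_finite (H := B.subgroupOf A))) h2
  rw [← h4] at hy
  obtain ⟨u, hu⟩ := hy
  exact ⟨u.1, u.2, hu⟩

/-- Suppose all orbits of `H` on `G ⧸ H` other than `orbit H c` have a length smaller than, and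
coprime to, that of `orbit H c`. Then the setwise stabilizer of `orbit H c` consists of the `g`
with `gH` outside this orbit. -/
lemma mem_stabilizer_orbit_iff [Finite G] (H : Subgroup G) (c : G ⧸ H)
    (h1 : (MulAction.orbit H c).ncard ≠ 1)
    (hlt : ∀ x, x ∉ MulAction.orbit H c →
      (MulAction.orbit H x).ncard < (MulAction.orbit H c).ncard)
    (hcop : ∀ x, x ∉ MulAction.orbit H c →
      (MulAction.orbit H c).ncard.Coprime (MulAction.orbit H x).ncard) (g : G) :
    g ∈ MulAction.stabilizer G (MulAction.orbit H c) ↔ (g : G ⧸ H) ∉ MulAction.orbit H c := by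
  constructor
  · intro hg hmem
    have h2 : g⁻¹ • (g : G ⧸ H) ∈ g⁻¹ • MulAction.orbit H c := Set.smul_mem_smul_set hmem
    rw [MulAction.mem_stabilizer_iff.1 (inv_mem hg), MulAction.Quotient.smul_coe, smul_eq_mul,
      inv_mul_cancel] at h2
    rw [← MulAction.orbit_eq_iff.2 h2] at h1
    apply h1
    rw [Set.ncard_eq_one]
    refine ⟨((1 : G) : G ⧸ H), Set.eq_singleton_iff_unique_mem.2
      ⟨MulAction.mem_orbit_self _, ?_⟩⟩
    rintro _ ⟨u, rfl⟩
    change u • ((1 : G) : G ⧸ H) = _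
    rw [sub_smul_mk, mul_one, eq_comm, QuotientGroup.eq, inv_one, one_mul]
    exact u.2
  · intro hg
    have hsub : g⁻¹ • MulAction.orbit H c ⊆ MulAction.orbit H (g⁻¹ • c) := by
      rintro _ ⟨y, hy, rfl⟩
      obtain ⟨u, hux, huy⟩ := exists_smul_of_coprime H (hcop _ hg) hy
      have hu : g⁻¹ * u * g ∈ H := by
        rw [sub_smul_mk, eq_comm, QuotientGroup.eq] at hux
        rwa [mul_assoc]
      refine ⟨⟨_, hu⟩, ?_⟩
      simp only [sub_smul_eq, ← huy, smul_smul]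
      congr 1
      group
    have hcard : (g⁻¹ • MulAction.orbit H c).ncard = (MulAction.orbit H c).ncard :=
      Set.ncard_smul_set _ _
    have hle := Set.ncard_le_ncard hsub (Set.toFinite _)
    have hmem : g⁻¹ • c ∈ MulAction.orbit H c := by
      by_contra hcon
      have := hlt _ hcon
      omega
    rw [MulAction.orbit_eq_iff.2 hmem] at hsub
    rw [← inv_mem_iff, MulAction.mem_stabilizer_iff]
    exact Set.eq_of_subset_of_ncard_le hsub hcard.ge (Set.toFinite _)

/-- A group with suborbit lengths `1, …, 1, p, q` on `G ⧸ H` has `p = 2` and `q = 3`, and the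
setwise stabilizer of the suborbit of length `q` has index two and contains `H` with index `3`. -/
lemma structure_of_lengths [Finite G] (H : Subgroup G) {p q : ℕ} (hp : p.Prime) (hq : q.Prime)
    (hpq : p < q) {b c : G ⧸ H} (hb : (MulAction.orbit H b).ncard = p)
    (hc : (MulAction.orbit H c).ncard = q)
    (hrest : ∀ x, x ∉ MulAction.orbit H b → x ∉ MulAction.orbit H c →
      (MulAction.orbit H x).ncard = 1) :
    p = 2 ∧ q = 3 ∧
      (∀ g : G, g ∈ MulAction.stabilizer G (MulAction.orbit H c) ↔
        (g : G ⧸ H) ∉ MulAction.orbit H c) ∧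
      H.relIndex (MulAction.stabilizer G (MulAction.orbit H c)) = 3 ∧
      (MulAction.stabilizer G (MulAction.orbit H c)).index = 2 := by
  have hp2 := hp.two_le
  have hlen : ∀ x, x ∉ MulAction.orbit H c →
      (MulAction.orbit H x).ncard = 1 ∨ (MulAction.orbit H x).ncard = p := by
    intro x hx
    by_cases hxb : x ∈ MulAction.orbit H b
    · right
      rw [MulAction.orbit_eq_iff.2 hxb, hb]
    · exact Or.inl (hrest x hxb hx)
  have hM := mem_stabilizer_orbit_iff H c (by omega)
    (fun x hx => by rcases hlen x hx with h | h <;> omega)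
    (fun x hx => by
      rw [hc]
      rcases hlen x hx with h | h
      · rw [h]; exact Nat.coprime_one_right q
      · rw [h]; exact (Nat.coprime_primes hq hp).2 hpq.ne')
  set M := MulAction.stabilizer G (MulAction.orbit H c) with hMdef
  have hfix : ∀ x : G ⧸ H, x ∈ MulAction.fixedPoints H (G ⧸ H) ↔
      (MulAction.orbit H x).ncard = 1 := by
    intro x
    rw [Set.ncard_eq_one]
    constructor
    · intro hx
      exact ⟨x, Set.eq_singleton_iff_unique_mem.2 ⟨MulAction.mem_orbit_self _, by
        rintro _ ⟨u, rfl⟩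
        exact hx u⟩⟩
    · rintro ⟨y, hy⟩ u
      have h1 : u • x ∈ ({y} : Set (G ⧸ H)) := hy ▸ MulAction.mem_orbit x u
      have h2 : x ∈ ({y} : Set (G ⧸ H)) := hy ▸ MulAction.mem_orbit_self x
      rw [Set.mem_singleton_iff.1 h1, Set.mem_singleton_iff.1 h2]
  have hfixc : ∀ x ∈ MulAction.fixedPoints H (G ⧸ H), x ∉ MulAction.orbit H c := by
    intro x hx hxc
    rw [hfix, MulAction.orbit_eq_iff.2 hxc] at hx
    omega
  have hHN : H ≤ Subgroup.normalizer (H : Set G) := Subgroup.le_normalizer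
  have hNM : Subgroup.normalizer (H : Set G) ≤ M := by
    intro g hg
    rw [hM]
    refine hfixc _ ?_
    intro u
    rw [sub_smul_mk, eq_comm, QuotientGroup.eq, ← mul_assoc]
    have := (Subgroup.mem_normalizer_iff.1 (inv_mem hg) u).1 u.2
    simpa using this
  have hHM := hHN.trans hNM
  -- The points outside the long orbit form a block with setwise stabilizer `M`.
  have horb : MulAction.orbit M ((1 : G) : G ⧸ H) = (MulAction.orbit H c)ᶜ := by
    ext x
    induction x using QuotientGroup.induction_on with
    | H a =>
    constructor
    · rintro ⟨u, hu⟩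
      have hu' : ((u * 1 : G) : G ⧸ H) = a := hu
      rw [← hu', mul_one]
      exact (hM u).1 u.2
    · intro ha
      refine ⟨⟨a, (hM a).2 ha⟩, ?_⟩
      change ((a * 1 : G) : G ⧸ H) = a
      rw [mul_one]
  have hrel : H.relIndex M = (MulAction.orbit H c)ᶜ.ncard := by
    rw [← horb, ← MulAction.index_stabilizer]
    have : MulAction.stabilizer M ((1 : G) : G ⧸ H) = H.subgroupOf M := by
      ext u
      rw [MulAction.mem_stabilizer_iff, sub_smul_eq, Subgroup.mem_subgroupOf,
        MulAction.Quotient.smul_coe, eq_comm, QuotientGroup.eq]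
      simp
    rw [this]
    rfl
  have hindex : H.relIndex M * M.index = q + H.relIndex M := by
    rw [Subgroup.relIndex_mul_index hHM, hrel, ← hc, Set.ncard_add_ncard_compl]
    rfl
  have hm : Nat.card (MulAction.fixedPoints H (G ⧸ H)) =
      H.relIndex (Subgroup.normalizer (H : Set G)) :=
    Nat.card_congr (Sylow.fixedPointsMulLeftCosetsEquivQuotient H)
  have hsum : H.relIndex M = H.relIndex (Subgroup.normalizer (H : Set G)) + p := by
    rw [hrel, ← hm, Nat.card_coe_set_eq, ← hb, ← Set.ncard_union_eq _]
    · congr 1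
      ext x
      rw [Set.mem_compl_iff, Set.mem_union]
      constructor
      · intro hx
        by_cases hxb : x ∈ MulAction.orbit H b
        · exact Or.inr hxb
        · exact Or.inl ((hfix x).2 (hrest x hxb hx))
      · rintro (hx | hx)
        · exact hfixc x hx
        · intro hxc
          have h1 := MulAction.orbit_eq_iff.2 hx
          rw [MulAction.orbit_eq_iff.2 hxc] at h1
          rw [h1] at hc
          omega
    · rw [Set.disjoint_left]
      intro x hx hxb
      rw [hfix, MulAction.orbit_eq_iff.2 hxb] at hx
      omega
  have hdvd : H.relIndex (Subgroup.normalizer (H : Set G)) ∣ H.relIndex M :=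
    ⟨_, (Subgroup.relIndex_mul_relIndex H _ M hHN hNM).symm⟩
  have hdq : H.relIndex M ∣ q := by
    have : H.relIndex M ∣ q + H.relIndex M := ⟨_, hindex.symm⟩
    exact (Nat.dvd_add_left dvd_rfl).1 this
  have hMq : H.relIndex M = q := by
    rcases (Nat.dvd_prime hq).1 hdq with h | h
    · omega
    · exact h
  rw [hMq] at hsum hdvd hindex
  have hm1 : H.relIndex (Subgroup.normalizer (H : Set G)) = 1 := by
    rcases (Nat.dvd_prime hq).1 hdvd with h | h <;> omega
  have hpeq : p = 2 := by
    -- The primes `p` and `q = p + 1` are consecutive integers.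
    rcases hp.eq_two_or_odd with h | h
    · exact h
    · rcases hq.eq_two_or_odd with h' | h' <;> omega
  have hq3 : q = 3 := by omega
  refine ⟨hpeq, hq3, hM, by rw [hMq, hq3], ?_⟩
  have : q * M.index = q * 2 := by omega
  exact Nat.eq_of_mul_eq_mul_left hq.pos this

lemma prod_subF_le [Finite G] (K : Subgroup G) (w : MulAction.orbitRel.Quotient K (G ⧸ K)) :
    transProb K K ≤ subF (orbLen w) := by
  have : Fintype (MulAction.orbitRel.Quotient K (G ⧸ K)) := Fintype.ofFinite _
  rw [transProb_eq_prod, ← Finset.mul_prod_erase _ _ (Finset.mem_univ w)]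
  exact mul_le_of_le_one_right (subF_pos _).le
    (Finset.prod_le_one (fun _ _ => (subF_pos _).le) fun _ _ => subF_le_one (orbLen_pos _))

lemma prod_subF_le_mul [Finite G] (K : Subgroup G)
    {w w' : MulAction.orbitRel.Quotient K (G ⧸ K)} (hne : w' ≠ w) :
    transProb K K ≤ subF (orbLen w) * subF (orbLen w') := by
  have : Fintype (MulAction.orbitRel.Quotient K (G ⧸ K)) := Fintype.ofFinite _
  rw [transProb_eq_prod, ← Finset.mul_prod_erase _ _ (Finset.mem_univ w),
    ← Finset.mul_prod_erase _ _ (Finset.mem_erase.2 ⟨hne, Finset.mem_univ w'⟩)]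
  refine mul_le_mul_of_nonneg_left ?_ (subF_pos _).le
  exact mul_le_of_le_one_right (subF_pos _).le
    (Finset.prod_le_one (fun _ _ => (subF_pos _).le) fun _ _ => subF_le_one (orbLen_pos _))

/-- In the exceptional configuration with suborbits of lengths `1, 2, 3`, the pointwise stabilizer
`K` of the suborbit of length `3` has `P_G(K) < 1/9`. -/
lemma exists_small [Finite G] (H : Subgroup G) {b c : G ⧸ H}
    (hb : (MulAction.orbit H b).ncard = 2) (hc : (MulAction.orbit H c).ncard = 3)
    (hM : ∀ g : G, g ∈ MulAction.stabilizer G (MulAction.orbit H c) ↔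
        (g : G ⧸ H) ∉ MulAction.orbit H c)
    (hrel : H.relIndex (MulAction.stabilizer G (MulAction.orbit H c)) = 3)
    (hind : (MulAction.stabilizer G (MulAction.orbit H c)).index = 2) :
    ∃ K : Subgroup G, transProb K K < 1 / 9 := by
  set C := MulAction.orbit H c with hC
  set M := MulAction.stabilizer G C with hMdef
  set φ := MulAction.toPermHom M C with hφ
  set K : Subgroup G := φ.ker.map M.subtype with hK
  have hKM : K ≤ M := Subgroup.map_subtype_le _
  have hKfix : ∀ u ∈ K, ∀ x ∈ C, u • x = x := by
    rintro _ ⟨u, hu, rfl⟩ x hx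
    have h1 : φ u ⟨x, hx⟩ = ⟨x, hx⟩ := by
      rw [MonoidHom.mem_ker.1 hu]
      rfl
    exact congrArg Subtype.val h1
  have hj : K.relIndex M ≤ 6 := by
    have h1 : K.relIndex M = φ.ker.index := by
      rw [Subgroup.relIndex, Subgroup.subgroupOf, hK,
        Subgroup.comap_map_eq_self_of_injective M.subtype_injective]
    have h2 : Nat.card (Equiv.Perm C) = 6 := by
      rw [Nat.card_perm, Nat.card_coe_set_eq, hc]
      rfl
    rw [h1, Subgroup.index_ker, ← h2]
    exact Nat.card_le_card_of_injective _ Subtype.val_injective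
  have hHM : H ≤ M := by
    intro h hh
    refine MulAction.mem_stabilizer_iff.2 ?_
    exact MulAction.smul_orbit (⟨h, hh⟩ : H) c
  have hcM : Nat.card H * 3 = Nat.card M := by
    rw [← hrel, Subgroup.relIndex, ← Subgroup.card_mul_index (H.subgroupOf M)]
    congr 1
    exact (Nat.card_congr (Subgroup.subgroupOfEquivOfLe hHM).toEquiv).symm
  have hcK : Nat.card K * K.relIndex M = Nat.card M := by
    rw [Subgroup.relIndex, ← Subgroup.card_mul_index (K.subgroupOf M)]
    congr 1
    exact (Nat.card_congr (Subgroup.subgroupOfEquivOfLe hKM).toEquiv).symm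
  -- A conjugate of `K` by `g ∉ M` fixes the other block pointwise.
  have hcompl : ∀ g ∉ M, ∀ x ∉ C, g⁻¹ • x ∈ C := by
    intro g hg x hx
    induction x using QuotientGroup.induction_on with
    | H a =>
    have ha : a ∈ M := (hM a).2 hx
    have h1 : g⁻¹ * a ∉ M := fun h => hg (by
      have := mul_mem ha (inv_mem h)
      simpa using this)
    rw [hM, not_not] at h1
    exact h1
  have hS : ∀ g ∉ M, 6 * Nat.card (MulAction.stabilizer K (g : G ⧸ K)) ≤ Nat.card H := by
    intro g hg
    have hall : ∀ u : MulAction.stabilizer K (g : G ⧸ K), ∀ x : G ⧸ H, ((u : K) : G) • x = x := by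
      intro u x
      by_cases hx : x ∈ C
      · exact hKfix _ u.1.2 x hx
      · have h1 : g⁻¹ * ((u : K) : G) * g ∈ K := by
          have h2 := MulAction.mem_stabilizer_iff.1 u.2
          rw [sub_smul_mk, eq_comm, QuotientGroup.eq] at h2
          rwa [mul_assoc]
        have h3 := hKfix _ h1 _ (hcompl g hg x hx)
        rw [smul_smul, mul_assoc, mul_inv_cancel, mul_one, mul_smul] at h3
        exact smul_left_cancel _ h3
    have hH : ∀ u : MulAction.stabilizer K (g : G ⧸ K), ((u : K) : G) ∈ H := by
      intro u
      have h1 := hall u ((1 : G) : G ⧸ H)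
      rw [MulAction.Quotient.smul_coe, eq_comm, QuotientGroup.eq] at h1
      simpa using h1
    set L := MulAction.stabilizer H b ⊓ MulAction.stabilizer H c with hL
    have h2 : 2 ∣ L.index := by
      rw [← hb, ← MulAction.index_stabilizer]
      exact Subgroup.index_dvd_of_le inf_le_left
    have h3 : 3 ∣ L.index := by
      rw [← hc, ← MulAction.index_stabilizer]
      exact Subgroup.index_dvd_of_le inf_le_right
    have h6 : 6 ≤ L.index := by
      have h0 : L.index ≠ 0 := Subgroup.index_ne_zero_of_finite
      omega
    have hcard : Nat.card (MulAction.stabilizer K (g : G ⧸ K)) ≤ Nat.card L := by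
      refine Nat.card_le_card_of_injective
        (fun u => (⟨⟨((u : K) : G), hH u⟩, ?_, ?_⟩ : L)) ?_
      · exact (sub_smul_eq _ _ _).trans (hall u b)
      · exact (sub_smul_eq _ _ _).trans (hall u c)
      · intro u v huv
        ext
        exact congrArg (fun z : L => ((z : H) : G)) huv
    have := Subgroup.card_mul_index L
    nlinarith
  have hlen : ∀ g : G, Nat.card (MulAction.stabilizer K (g : G ⧸ K)) *
      orbLen (orbOf K (g : G ⧸ K)) = Nat.card K := fun g => by
    rw [orbLen_orbOf, ← MulAction.index_stabilizer, Subgroup.card_mul_index]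
  have hH0 : 0 < Nat.card H := Nat.card_pos
  have hge : ∀ g ∉ M, 3 ≤ orbLen (orbOf K (g : G ⧸ K)) := by
    intro g hg
    have h1 := hS g hg
    have h2 := hlen g
    by_contra! hlt
    nlinarith
  obtain ⟨g, hg⟩ : ∃ g, g ∉ M := by
    by_contra! hcon
    rw [(Subgroup.eq_top_iff' M).2 hcon, Subgroup.index_top] at hind
    omega
  refine ⟨K, ?_⟩
  have hf3 : subF 3 = 2 / 9 := by norm_num [subF, Nat.factorial]
  have hf4 : subF 4 = 3 / 32 := by norm_num [subF, Nat.factorial]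
  rcases (hge g hg).eq_or_lt with h3 | h4
    -- A single double coset outside `M` would make `K` too large.
  · obtain ⟨g', hg', hne⟩ : ∃ g' ∉ M, orbOf K (g' : G ⧸ K) ≠ orbOf K (g : G ⧸ K) := by
      by_contra! hcon
      have hsub : g • MulAction.orbit M ((1 : G) : G ⧸ K) ⊆ MulAction.orbit K (g : G ⧸ K) := by
        rintro _ ⟨_, ⟨m, rfl⟩, rfl⟩
        have hgm : g * m ∉ M := fun h => hg (by
          have := mul_mem h (inv_mem m.2)
          simpa using this)
        have h1 := orbOf_eq_iff.1 (hcon _ hgm)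
        convert h1 using 1
        change ((g * (m * 1) : G) : G ⧸ K) = _
        rw [mul_one]
      have h1 := Set.ncard_le_ncard hsub (Set.toFinite _)
      have hst : MulAction.stabilizer M ((1 : G) : G ⧸ K) = K.subgroupOf M := by
        ext u
        rw [MulAction.mem_stabilizer_iff, sub_smul_eq, Subgroup.mem_subgroupOf,
          MulAction.Quotient.smul_coe, eq_comm, QuotientGroup.eq]
        simp
      rw [Set.ncard_smul_set, ← MulAction.index_stabilizer, hst, ← orbLen_orbOf, ← h3] at h1
      have h2 : K.relIndex M ≤ 3 := h1
      have h5 := hS g hg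
      have h6 := hlen g
      rw [← h3] at h6
      nlinarith
    have h1 := prod_subF_le_mul K hne
    have h2 : subF (orbLen (orbOf K (g' : G ⧸ K))) ≤ subF 3 :=
      subF_anti (by norm_num) (hge g' hg')
    rw [← h3] at h1
    rw [hf3] at h1 h2
    linarith
  · have h1 := prod_subF_le K (orbOf K (g : G ⧸ K))
    have h2 : subF (orbLen (orbOf K (g : G ⧸ K))) ≤ subF 4 := subF_anti (by norm_num) h4
    rw [hf4] at h2
    linarith

end Structure

theorem stmt17 (p q : ℕ) (hp : p.Prime) (hq : q.Prime) (hpq : p < q)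
    (G : Type*) [Group G] [Finite G] :
    tp G ≠ ((p.factorial : ℚ) / (p : ℚ) ^ p) * ((q.factorial : ℚ) / (q : ℚ) ^ q) := by
  intro htp
  change tp G = subF p * subF q at htp
  have : Fintype (Subgroup G) := Fintype.ofFinite _
  have htp_eq : tp G =
      Finset.univ.inf' Finset.univ_nonempty fun H : Subgroup G => transProb H H := by
    unfold tp
    congr!
  have hmin : ∀ K : Subgroup G, tp G ≤ transProb K K := fun K =>
    htp_eq ▸ Finset.inf'_le (fun H : Subgroup G => transProb H H) (Finset.mem_univ K)
  obtain ⟨H, -, hH⟩ := Finset.exists_mem_eq_inf' (Finset.univ_nonempty (α := Subgroup G))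
    fun H : Subgroup G => transProb H H
  rw [← htp_eq] at hH
  have : Fintype (MulAction.orbitRel.Quotient H (G ⧸ H)) := Fintype.ofFinite _
  rw [htp, transProb_eq_prod] at hH
  obtain ⟨i, j, -, hi, hj, hrest⟩ := lengths_of_prod_subF orbLen orbLen_pos hp hq hpq hH.symm
  induction i using Quotient.inductionOn' with
  | h b =>
  induction j using Quotient.inductionOn' with
  | h c =>
  change orbLen (orbOf H b) = p at hi
  change orbLen (orbOf H c) = q at hj
  rw [orbLen_orbOf] at hi hj
  obtain ⟨rfl, rfl, hM, hrel, hind⟩ := structure_of_lengths H hp hq hpq hi hj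
    fun x hxb hxc => by
      rw [← orbLen_orbOf]
      exact hrest _ (fun h => hxb (orbOf_eq_iff.1 h)) fun h => hxc (orbOf_eq_iff.1 h)
  obtain ⟨K, hK⟩ := exists_small H hi hj hM hrel hind
  have h1 := hmin K
  have h2 : subF 2 * subF 3 = 1 / 9 := by norm_num [subF, Nat.factorial]
  rw [htp, h2] at h1
  linarith
end

section
/- If G is a non-abelian finite group of odd order, then tp(G) ≤ 4/81. -/
/-! A double coset `HgH` consisting of `m` left cosets of `H` also consists of `m` right cosets, and
every left coset in it meets every right coset in it in `|H| / m` elements. Hence a random choice of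
one element from each left coset in `HgH` hits distinct right cosets with probability `m! / m ^ m`,
and `P_G(H)` is the product of these factors over all double cosets; only the upper bound given by
two of the factors is needed (`card_choice_orbit_le`, `transProb_le_of_not_normal`).

If `|G|` is odd and `H` is not normal, some `HgH` has `m > 1`; since `m` divides `|H|`, it is odd, so
`m ≥ 3` and `m! / m ^ m ≤ 2 / 9`. The double coset `Hg⁻¹H` has the same `m` and differs from `HgH`,
because otherwise `(g h) ^ 2 ∈ H` for some `h ∈ H`, forcing `g ∈ H`. Therefore
`P_G(H) ≤ (2 / 9) ^ 2`.

A non-normal subgroup exists because an odd-order group with all subgroups normal is abelian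
(`commute_of_forall_normal`). Right cosets `Hx` are encoded throughout as left cosets `x⁻¹H`, so that
double cosets become orbits of `H` acting on `G ⧸ H`. -/

open scoped Pointwise Classical

/-! ### Odd-order groups all of whose subgroups are normal -/

/-- Conjugation formula behind `[a ^ n, b] = [a, b] ^ n` when the commutator commutes with `a`. -/
theorem conj_pow_of_comm {G : Type*} [Group G] {a b c : G} (hc : c = a * b * a⁻¹ * b⁻¹)
    (hca : Commute c a) (n : ℕ) : a ^ n * b = c ^ n * b * a ^ n := by
  have h1 : b * a * b⁻¹ = c⁻¹ * a := by rw [hc]; group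
  have h2 : b * a ^ n * b⁻¹ = c⁻¹ ^ n * a ^ n := by
    rw [← hca.inv_left.mul_pow, ← h1, conj_pow]
  have h3 : b * a ^ n = c⁻¹ ^ n * a ^ n * b := by rw [← h2]; group
  rw [mul_assoc (c ^ n), h3, inv_pow]; group

/-- The power formula in nilpotency class two. -/
theorem mul_pow_class_two {G : Type*} [Group G] {x y d : G} (h : y * x = d * (x * y))
    (hx : Commute d x) (hy : Commute d y) (n : ℕ) :
    (x * y) ^ n = d ^ (n.choose 2) * (x ^ n * y ^ n) := by
  have key : ∀ n : ℕ, y ^ n * x = d ^ n * (x * y ^ n) := by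
    intro n
    induction n with
    | zero => simp
    | succ n ih =>
      calc y ^ (n + 1) * x = y ^ n * (y * x) := by rw [pow_succ, mul_assoc]
        _ = y ^ n * d * (x * y) := by rw [h, mul_assoc]
        _ = d * (y ^ n * x) * y := by rw [← (hy.pow_right n).eq]; group
        _ = d ^ (n + 1) * (x * y ^ (n + 1)) := by rw [ih, pow_succ' d, pow_succ y]; group
  induction n with
  | zero => simp
  | succ n ih =>
    have hdn : Commute (d ^ n) (x ^ n) := (hx.pow_pow n n)
    calc (x * y) ^ (n + 1) = d ^ (n.choose 2) * (x ^ n * (y ^ n * x) * y) := by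
          rw [pow_succ, ih]; group
      _ = d ^ (n.choose 2) * ((x ^ n * d ^ n) * (x * y ^ n) * y) := by rw [key]; group
      _ = d ^ (n.choose 2) * d ^ n * (x ^ n * x * (y ^ n * y)) := by rw [← hdn.eq]; group
      _ = _ := by
        rw [← pow_add, ← pow_succ, ← pow_succ, Nat.choose_succ_succ' n 1, Nat.choose_one_right,
          add_comm n (n.choose _)]

/-- An element killed by `p` and lying in `⟨a⟩`, `o(a) = p ^ (m + 1)`, is a
`p ^ m`-th power in `⟨a⟩`. -/
theorem exists_eq_pow_of_pow_eq_one {G : Type*} [Group G] {a c : G} {p m : ℕ} (hp : p.Prime)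
    (ha : orderOf a = p ^ (m + 1)) (hc : c ∈ Subgroup.zpowers a) (hcp : c ^ p = 1) :
    ∃ i : ℤ, c = a ^ ((p : ℤ) ^ m * i) := by
  obtain ⟨j, rfl⟩ := Subgroup.mem_zpowers_iff.1 hc
  rw [← zpow_natCast, ← zpow_mul, ← orderOf_dvd_iff_zpow_eq_one, ha, pow_succ] at hcp
  push_cast at hcp
  have hp0 : (p : ℤ) ≠ 0 := by exact_mod_cast hp.ne_zero
  obtain ⟨i, rfl⟩ := Int.dvd_of_mul_dvd_mul_right hp0 hcp
  exact ⟨i, rfl⟩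

/-- A finite group of odd order with all subgroups normal is abelian: from a
noncommuting pair `a`, `b` with `o(a) + o(b)` minimal, both orders are shown to be powers of
one prime `p` with `[a, b] ^ p = 1`, and then `b` can be multiplied by a power of `a`
to lower its order. -/
theorem commute_of_forall_normal {G : Type*} [Group G] [Finite G] (hodd : Odd (Nat.card G))
    (hN : ∀ H : Subgroup G, H.Normal) (a b : G) : Commute a b := by
  suffices H : ∀ n : ℕ, ∀ a b : G, orderOf a + orderOf b = n → Commute a b from H _ a b rfl
  intro n
  induction n using Nat.strong_induction_on with
  | _ n ih =>
  intro a b hab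
  wlog hle : orderOf b ≤ orderOf a generalizing a b
  · exact (this b a (by omega) (by omega)).symm
  by_contra hnc
  obtain ⟨c, hc⟩ : ∃ c, c = a * b * a⁻¹ * b⁻¹ := ⟨_, rfl⟩
  have hc1 : c ≠ 1 := by
    intro h
    apply hnc
    rw [h] at hc
    have : a * b = (a * b * a⁻¹ * b⁻¹) * (b * a) := by group
    rw [← hc, one_mul] at this
    exact this
  have hcb : c ∈ Subgroup.zpowers b := by
    rw [hc]
    exact mul_mem ((hN _).conj_mem b (Subgroup.mem_zpowers b) a)
      (inv_mem (Subgroup.mem_zpowers b))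
  have hca : c ∈ Subgroup.zpowers a := by
    have : c = a * (b * a⁻¹ * b⁻¹) := by rw [hc]; group
    rw [this]
    exact mul_mem (Subgroup.mem_zpowers a)
      ((hN _).conj_mem _ (inv_mem (Subgroup.mem_zpowers a)) b)
  have hCa : Commute c a := by
    obtain ⟨i, rfl⟩ := Subgroup.mem_zpowers_iff.1 hca
    exact (Commute.refl a).zpow_left i
  have hCb : Commute c b := by
    obtain ⟨i, rfl⟩ := Subgroup.mem_zpowers_iff.1 hcb
    exact (Commute.refl b).zpow_left i
  have hlt : ∀ (x : G) (p : ℕ), p.Prime → p ∣ orderOf x → orderOf (x ^ p) < orderOf x := by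
    intro x p hp hpx
    rw [orderOf_pow_of_dvd hp.ne_zero hpx]
    exact Nat.div_lt_self (orderOf_pos x) hp.one_lt
  -- minimality: `p`-th powers of `a` commute with `b`, and symmetrically
  have hpa : ∀ p : ℕ, p.Prime → p ∣ orderOf a → Commute (a ^ p) b := fun p hp hd =>
    ih _ (by have := hlt a p hp hd; omega) _ _ rfl
  have hpb : ∀ p : ℕ, p.Prime → p ∣ orderOf b → Commute a (b ^ p) := fun p hp hd =>
    ih _ (by have := hlt b p hp hd; omega) _ _ rfl
  have hcpa : ∀ p : ℕ, p.Prime → p ∣ orderOf a → c ^ p = 1 := by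
    intro p hp hd
    have h := conj_pow_of_comm hc hCa p
    rw [(hpa p hp hd).eq, mul_assoc] at h
    exact (right_eq_mul.1 h)
  have hcpb : ∀ p : ℕ, p.Prime → p ∣ orderOf b → c ^ p = 1 := by
    intro p hp hd
    have h := conj_pow_of_comm (a := b) (b := a) (c := c⁻¹) (by rw [hc]; group) hCb.inv_left p
    rw [← (hpb p hp hd).eq, mul_assoc] at h
    simpa using (right_eq_mul.1 h)
  have huniq : ∀ p q : ℕ, p.Prime → q.Prime → c ^ p = 1 → c ^ q = 1 → q = p := by
    intro p q hp hq h1 h2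
    by_contra hne
    have hcop : Nat.Coprime p q := (Nat.coprime_primes hp hq).2 (Ne.symm hne)
    have := Nat.dvd_gcd (orderOf_dvd_of_pow_eq_one h1) (orderOf_dvd_of_pow_eq_one h2)
    rw [hcop.gcd_eq_one, Nat.dvd_one, orderOf_eq_one_iff] at this
    exact hc1 this
  have ha1 : orderOf a ≠ 1 := by
    intro h
    rw [orderOf_eq_one_iff] at h
    exact hnc (h ▸ Commute.one_left b)
  have hb1 : orderOf b ≠ 1 := by
    intro h
    rw [orderOf_eq_one_iff] at h
    exact hnc (h ▸ Commute.one_right a)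
  obtain ⟨p, hp, hpda⟩ := Nat.exists_prime_and_dvd ha1
  have hcp : c ^ p = 1 := hcpa p hp hpda
  have hordA := Nat.eq_prime_pow_of_unique_prime_dvd (orderOf_pos a).ne'
    (fun {d} hd hdd => huniq p d hp hd hcp (hcpa d hd hdd))
  have hordB := Nat.eq_prime_pow_of_unique_prime_dvd (orderOf_pos b).ne'
    (fun {d} hd hdd => huniq p d hp hd hcp (hcpb d hd hdd))
  obtain ⟨m, hm⟩ : ∃ m, (orderOf a).primeFactorsList.length = m + 1 :=
    Nat.exists_eq_succ_of_ne_zero (fun h => ha1 (by rw [hordA, h, pow_zero]))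
  obtain ⟨k, hk⟩ : ∃ k, (orderOf b).primeFactorsList.length = k + 1 :=
    Nat.exists_eq_succ_of_ne_zero (fun h => hb1 (by rw [hordB, h, pow_zero]))
  rw [hm] at hordA
  rw [hk] at hordB
  have hkm : k ≤ m := by
    rw [hordA, hordB] at hle
    have := (Nat.pow_le_pow_iff_right hp.one_lt).1 hle
    omega
  have hpodd : Odd p := hodd.of_dvd_nat (hpda.trans (orderOf_dvd_natCard a))
  obtain ⟨i, hi⟩ := exists_eq_pow_of_pow_eq_one hp hordA hca hcp
  obtain ⟨j, hj⟩ := exists_eq_pow_of_pow_eq_one hp hordB hcb hcp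
  have hpdb : p ∣ orderOf b := by rw [hordB]; exact dvd_pow_self p (by omega)
  have hbp := hpb p hp hpdb
  -- `x ^ (p ^ k) = c⁻¹` while `y ^ (p ^ k) = c`
  obtain ⟨x, hx⟩ : ∃ x, x = a ^ (-((p : ℤ) ^ (m - k) * i)) := ⟨_, rfl⟩
  obtain ⟨y, hy⟩ : ∃ y, y = b ^ j := ⟨_, rfl⟩
  have hxk : x ^ (p ^ k) = c⁻¹ := by
    rw [hx, hi, ← zpow_natCast, ← zpow_mul, ← zpow_neg]
    congr 1
    push_cast
    have : (p : ℤ) ^ m = (p : ℤ) ^ (m - k) * (p : ℤ) ^ k := by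
      rw [← pow_add, Nat.sub_add_cancel hkm]
    rw [this]; ring
  have hyk : y ^ (p ^ k) = c := by
    rw [hy, hj, ← zpow_natCast, ← zpow_mul]
    congr 1
    push_cast
    ring
  have hax : Commute a x := by rw [hx]; exact (Commute.refl a).zpow_right _
  have hxy : (x * y) ^ (p ^ k) = 1 := by
    rcases Nat.eq_zero_or_pos k with hk0 | hk0
    · subst hk0
      simp only [pow_zero, pow_one] at hxk hyk ⊢
      rw [hxk, hyk, inv_mul_cancel]
    · have hpxy : (x * y) ^ p = x ^ p * y ^ p := by
        -- `d = [y, x]` lies in `⟨x⟩ ∩ ⟨y⟩`, so it commutes with `x` and `y`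
        obtain ⟨d, hd⟩ : ∃ d, d = y * x * y⁻¹ * x⁻¹ := ⟨_, rfl⟩
        have hdx : Commute d x := by
          have hmem : d ∈ Subgroup.zpowers x := by
            rw [hd]
            exact mul_mem ((hN _).conj_mem _ (Subgroup.mem_zpowers x) y)
              (inv_mem (Subgroup.mem_zpowers x))
          obtain ⟨l, rfl⟩ := Subgroup.mem_zpowers_iff.1 hmem
          exact (Commute.refl x).zpow_left l
        have hdy : Commute d y := by
          have hmem : d ∈ Subgroup.zpowers y := by
            have : d = y * (x * y⁻¹ * x⁻¹) := by rw [hd]; group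
            rw [this]
            exact mul_mem (Subgroup.mem_zpowers y)
              ((hN _).conj_mem _ (inv_mem (Subgroup.mem_zpowers y)) x)
          obtain ⟨l, rfl⟩ := Subgroup.mem_zpowers_iff.1 hmem
          exact (Commute.refl y).zpow_left l
        have hdp : d ^ p = 1 := by
          have h := conj_pow_of_comm hd hdy p
          have hcomm : Commute (y ^ p) x := by
            rw [hy, hx, ← zpow_natCast, ← zpow_mul, mul_comm j, zpow_mul, zpow_natCast]
            exact (hbp.symm.zpow_left j).zpow_right _
          rw [hcomm.eq, mul_assoc] at h
          exact right_eq_mul.1 h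
        have h := mul_pow_class_two (x := x) (y := y) (d := d) (by rw [hd]; group) hdx hdy p
        have hch : p ∣ p.choose 2 := hp.dvd_choose_self (by norm_num) (by
          have := hp.two_le
          rcases hpodd with ⟨t, ht⟩
          omega)
        obtain ⟨t, ht⟩ := hch
        rw [h, ht, pow_mul, hdp, one_pow, one_mul]
      have hcomm : Commute (x ^ p) (y ^ p) := by
        have h : Commute a (y ^ p) := by
          rw [hy, ← zpow_natCast, ← zpow_mul, mul_comm j, zpow_mul, zpow_natCast]
          exact hbp.zpow_right j
        have h' : Commute x (y ^ p) := by rw [hx]; exact h.zpow_left _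
        exact h'.pow_left p
      obtain ⟨k', rfl⟩ : ∃ k', k = k' + 1 := ⟨k - 1, by omega⟩
      rw [pow_succ', pow_mul] at hxk hyk ⊢
      rw [hpxy, hcomm.mul_pow, hxk, hyk, inv_mul_cancel]
  have hlt' : orderOf (x * y) < orderOf b := by
    have h1 : orderOf (x * y) ≤ p ^ k :=
      Nat.le_of_dvd (pow_pos hp.pos k) (orderOf_dvd_of_pow_eq_one hxy)
    rw [hordB]
    exact lt_of_le_of_lt h1 (Nat.pow_lt_pow_right hp.one_lt (Nat.lt_succ_self k))
  have hcom : Commute a (x * y) := ih _ (by omega) _ _ rfl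
  have hay : Commute a (b ^ j) := by
    have : y = x⁻¹ * (x * y) := by group
    rw [← hy, this]
    exact hax.inv_right.mul_right hcom
  -- `p ∤ j`, so `b` is generated by `b ^ j` and `b ^ p`
  have hpj : ¬ (p : ℤ) ∣ j := by
    rintro ⟨l, rfl⟩
    apply hc1
    rw [hj, ← orderOf_dvd_iff_zpow_eq_one, hordB]
    exact ⟨l, by push_cast; ring⟩
  have hcop : IsCoprime (p : ℤ) j := (Nat.prime_iff_prime_int.1 hp).coprime_iff_not_dvd.2 hpj
  obtain ⟨u, v, huv⟩ := hcop
  apply hnc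
  have hb : b = (b ^ p) ^ u * (b ^ j) ^ v := by
    rw [← zpow_natCast, ← zpow_mul, ← zpow_mul, ← zpow_add, mul_comm (p : ℤ), mul_comm j, huv,
      zpow_one]
  rw [hb]
  exact (hbp.zpow_right u).mul_right (hay.zpow_right v)

/-! ### Counting choice functions -/

/-- Choosing `h q : S` for each `q : Q` so that the labels `φ q (h q)` are pairwise distinct: at most
`m!` label patterns, each realised by at most `k ^ m` choices. -/
theorem card_injective_choice_le {Q R S : Type*} [Finite Q] [Finite R] [Finite S] (φ : Q → S → R)
    (m k : ℕ) (hQ : Nat.card Q = m) (hR : Nat.card R = m)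
    (hk : ∀ q r, Nat.card {s // φ q s = r} ≤ k) :
    Nat.card {h : Q → S // Function.Injective fun q => φ q (h q)} ≤ m.factorial * k ^ m := by
  have := Fintype.ofFinite Q
  have := Fintype.ofFinite R
  let F : {h : Q → S // Function.Injective fun q => φ q (h q)} →
      Σ σ : Q ↪ R, ∀ q, {s // φ q s = σ q} :=
    fun h => ⟨⟨fun q => φ q (h.1 q), h.2⟩, fun q => ⟨h.1 q, rfl⟩⟩
  -- the chosen elements are read off from the image
  let E : (Σ σ : Q ↪ R, ∀ q, {s // φ q s = σ q}) → Q → S := fun z q => (z.2 q).1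
  have hF : Function.Injective F := fun h h' e => Subtype.ext (congrArg E e)
  refine (Nat.card_le_card_of_injective F hF).trans ?_
  rw [Nat.card_sigma]
  calc ∑ σ : Q ↪ R, Nat.card (∀ q, {s // φ q s = σ q})
      ≤ ∑ _σ : Q ↪ R, k ^ m := by
        refine Finset.sum_le_sum fun σ _ => ?_
        rw [Nat.card_pi]
        calc _ ≤ ∏ _q : Q, k := Finset.prod_le_prod' fun q _ => hk q _
          _ = k ^ m := by simp [← hQ]
    _ = m.factorial * k ^ m := by
        rw [Finset.sum_const, Finset.card_univ, Fintype.card_embedding_eq, smul_eq_mul,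
          ← Nat.card_eq_fintype_card, ← Nat.card_eq_fintype_card, hQ, hR, Nat.descFactorial_self]

theorem nine_mul_factorial_le {m : ℕ} (hm : 3 ≤ m) : 9 * m.factorial ≤ 2 * m ^ m := by
  induction m, hm using Nat.le_induction with
  | base => decide
  | succ m hm ih =>
    calc 9 * (m + 1).factorial = (m + 1) * (9 * m.factorial) := by rw [Nat.factorial_succ]; ring
      _ ≤ (m + 1) * (2 * m ^ m) := Nat.mul_le_mul_left _ ih
      _ ≤ (m + 1) * (2 * (m + 1) ^ m) := by gcongr; omega
      _ = 2 * (m + 1) ^ (m + 1) := by ring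

/-! ### Common transversals and the action of `H` on `G ⧸ H` -/

/-- A common transversal `T` is determined by `h : G ⧸ H → H` with `T = {q.out * h q}`; recording a
right coset `Hx` by `x⁻¹H`, the right transversal property makes `q ↦ (h q)⁻¹ • (q.out)⁻¹H`
injective. -/
theorem numDT_le_s18 {G : Type*} [Group G] [Finite G] (H : Subgroup G) :
    numDT H H ≤ Nat.card {h : G ⧸ H → H //
      Function.Injective fun q => (h q)⁻¹ • (((q.out : G)⁻¹ : G) : G ⧸ H)} := by
  choose t ht using fun (T : {T : Set G // IsDoubleTransversal H H T}) (q : G ⧸ H) =>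
    (T.2.1 q.out).exists
  have hmk : ∀ T q, ((t T q : G) : G ⧸ H) = q := by
    intro T q
    conv_rhs => rw [← QuotientGroup.out_eq' q]
    exact (QuotientGroup.eq.2 (ht T q).2).symm
  refine Nat.card_le_card_of_injective
    (fun T => ⟨fun q => ⟨(q.out)⁻¹ * t T q, (ht T q).2⟩, ?_⟩) ?_
  · intro q q' e
    have hact : ∀ q : G ⧸ H, (⟨(q.out)⁻¹ * t T q, (ht T q).2⟩ : H)⁻¹ •
        (((q.out : G)⁻¹ : G) : G ⧸ H) = (((t T q)⁻¹ : G) : G ⧸ H) := by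
      intro q
      change (((((q.out)⁻¹ * t T q)⁻¹ * (q.out)⁻¹ : G)) : G ⧸ H) = _
      congr 1
      group
    simp only [hact] at e
    have e' := QuotientGroup.eq.1 e
    rw [inv_inv] at e'
    have : t T q = t T q' := (T.2.2 (t T q')).unique ⟨(ht T q).1, e'⟩
      ⟨(ht T q').1, by simp⟩
    rw [← hmk T q, ← hmk T q', this]
  · intro T T' e
    have e1 : ∀ q, t T q = t T' q := by
      intro q
      have := congrFun (congrArg Subtype.val e) q
      simpa using congrArg Subtype.val this
    have hset : ∀ T x, x ∈ T.1 ↔ ∃ q, t T q = x := by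
      intro T x
      constructor
      · intro hx
        refine ⟨(x : G ⧸ H), (T.2.1 (x : G ⧸ H).out).unique (ht T _) ⟨hx, ?_⟩⟩
        exact QuotientGroup.eq.1 (QuotientGroup.out_eq' _)
      · rintro ⟨q, rfl⟩
        exact (ht T q).1
    apply Subtype.ext
    ext x
    rw [hset, hset]
    simp [e1]

theorem card_orbit_mul_card_stabilizer {G : Type*} [Group G] (H : Subgroup G) (y : G ⧸ H) :
    Nat.card (MulAction.orbit H y) * Nat.card (MulAction.stabilizer H y) = Nat.card H := by
  rw [← Nat.card_prod, Nat.card_congr (MulAction.orbitProdStabilizerEquivGroup H y)]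

/-- The double cosets `HgH` and `Hg⁻¹H` contain equally many left cosets of `H`. -/
theorem card_orbit_inv {G : Type*} [Group G] [Finite G] (H : Subgroup G) (g : G) :
    Nat.card (MulAction.orbit H ((g⁻¹ : G) : G ⧸ H)) =
      Nat.card (MulAction.orbit H (g : G ⧸ H)) := by
  have hstab : ∀ (x : G) (h : H), h ∈ MulAction.stabilizer H (x : G ⧸ H) ↔
      x⁻¹ * h * x ∈ H := by
    intro x h
    rw [MulAction.mem_stabilizer_iff, eq_comm]
    change (x : G ⧸ H) = ((h * x : G) : G ⧸ H) ↔ _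
    rw [QuotientGroup.eq, mul_assoc]
  have hle : ∀ x : G, Nat.card (MulAction.stabilizer H (x : G ⧸ H)) ≤
      Nat.card (MulAction.stabilizer H ((x⁻¹ : G) : G ⧸ H)) := by
    intro x
    refine Nat.card_le_card_of_injective
      (fun h => ⟨⟨x⁻¹ * h.1 * x, (hstab x h.1).1 h.2⟩, (hstab _ _).2 ?_⟩) ?_
    · have : x⁻¹⁻¹ * (x⁻¹ * (h.1 : G) * x) * x⁻¹ = h.1 := by group
      simp only [this]
      exact h.1.2
    · intro h h' e
      have := congrArg (fun z => ((z.1 : H) : G)) e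
      simpa using this
  have heq : Nat.card (MulAction.stabilizer H ((g⁻¹ : G) : G ⧸ H)) =
      Nat.card (MulAction.stabilizer H (g : G ⧸ H)) :=
    le_antisymm (by simpa using hle g⁻¹) (hle g)
  have h1 := card_orbit_mul_card_stabilizer H ((g⁻¹ : G) : G ⧸ H)
  have h2 := card_orbit_mul_card_stabilizer H (g : G ⧸ H)
  rw [heq, ← h2] at h1
  exact Nat.eq_of_mul_eq_mul_right Nat.card_pos h1

/-- Within the double coset `HgH`, of `m` left cosets, where `|H| = m k`, at most `m! k ^ m` choices
of one element per left coset lie in pairwise distinct right cosets. -/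
theorem card_choice_orbit_le {G : Type*} [Group G] [Finite G] (H : Subgroup G) (g : G) (m k : ℕ)
    (hm : Nat.card (MulAction.orbit H (g : G ⧸ H)) = m) (hk : Nat.card H = m * k) :
    Nat.card {h : MulAction.orbit H (g : G ⧸ H) → H // Function.Injective fun q =>
      (h q)⁻¹ • (((q.1.out : G)⁻¹ : G) : G ⧸ H)} ≤ m.factorial * k ^ m := by
  have hm' : Nat.card (MulAction.orbit H ((g⁻¹ : G) : G ⧸ H)) = m := (card_orbit_inv H g).trans hm
  have hmem : ∀ q ∈ MulAction.orbit H (g : G ⧸ H),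
      (((q.out : G)⁻¹ : G) : G ⧸ H) ∈ MulAction.orbit H ((g⁻¹ : G) : G ⧸ H) := by
    rintro q ⟨h, hq⟩
    have hq' : ((h * g : G) : G ⧸ H) = q := hq
    rw [← QuotientGroup.out_eq' q, QuotientGroup.eq] at hq'
    refine ⟨⟨_, inv_mem hq'⟩, ?_⟩
    change (((((h * g : G)⁻¹ * q.out)⁻¹ * g⁻¹ : G)) : G ⧸ H) = _
    rw [QuotientGroup.eq]
    have : (((h * g : G)⁻¹ * q.out)⁻¹ * g⁻¹)⁻¹ * (q.out)⁻¹ = (h : G)⁻¹ := by group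
    rw [this]
    exact inv_mem h.2
  let φ : MulAction.orbit H (g : G ⧸ H) → H → MulAction.orbit H ((g⁻¹ : G) : G ⧸ H) :=
    fun q h => ⟨h⁻¹ • (((q.1.out : G)⁻¹ : G) : G ⧸ H),
      MulAction.mem_orbit_of_mem_orbit _ (hmem q.1 q.2)⟩
  have hfib : ∀ q r, Nat.card {s // φ q s = r} ≤ k := by
    intro q r
    obtain ⟨y, hy⟩ : ∃ y, y = (((q.1.out : G)⁻¹ : G) : G ⧸ H) := ⟨_, rfl⟩
    have hyo : MulAction.orbit H y = MulAction.orbit H ((g⁻¹ : G) : G ⧸ H) :=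
      MulAction.orbit_eq_iff.2 (hy ▸ hmem q.1 q.2)
    have hst : Nat.card (MulAction.stabilizer H y) = k := by
      have h1 := card_orbit_mul_card_stabilizer H y
      rw [hyo, hm', hk] at h1
      have hm0 : 0 < m := by
        rw [← hm']
        have : Nonempty (MulAction.orbit H ((g⁻¹ : G) : G ⧸ H)) :=
          ⟨⟨_, MulAction.mem_orbit_self _⟩⟩
        exact Nat.card_pos
      exact Nat.eq_of_mul_eq_mul_left hm0 h1
    rw [← hst]
    rcases isEmpty_or_nonempty {s // φ q s = r} with he | ⟨⟨s₀, hs₀⟩⟩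
    · simp
    · have hφ : ∀ s, φ q s = r → s⁻¹ • y = r.1 := fun s hs => by
        rw [hy]; exact congrArg Subtype.val hs
      refine Nat.card_le_card_of_injective
        (fun s => (⟨s₀ * s.1⁻¹, ?_⟩ : MulAction.stabilizer H y)) ?_
      · rw [MulAction.mem_stabilizer_iff, mul_smul, hφ s.1 s.2, ← hφ s₀ hs₀, smul_inv_smul]
      · intro s s' e
        have := congrArg Subtype.val e
        exact Subtype.ext (by simpa using this)
  refine le_trans ?_ (card_injective_choice_le φ m k hm hm' hfib)
  refine Nat.card_le_card_of_injective
    (fun h => ⟨h.1, fun q q' e => h.2 (congrArg Subtype.val e)⟩) ?_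
  intro h h' e
  exact Subtype.ext (Subtype.mk.inj e)

/-- In a group of odd order, a non-normal subgroup `H` has two distinct double cosets `HgH`,
`Hg⁻¹H`, each of `m ≥ 3` left cosets, and each contributes a factor `m! / m ^ m ≤ 2 / 9`. -/
theorem transProb_le_of_not_normal {G : Type*} [Group G] [Finite G] (hodd : Odd (Nat.card G))
    (H : Subgroup G) (hH : ¬ H.Normal) : transProb H H ≤ 4 / 81 := by
  obtain ⟨g, h₀, hg⟩ : ∃ (g : G) (h : H), h • (g : G ⧸ H) ≠ (g : G ⧸ H) := by
    by_contra! hcon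
    apply hH
    refine ⟨fun n hn g => ?_⟩
    have h1 : (((n * g⁻¹ : G)) : G ⧸ H) = ((g⁻¹ : G) : G ⧸ H) := hcon g⁻¹ ⟨n, hn⟩
    have h2 := QuotientGroup.eq.1 h1.symm
    simpa [mul_assoc] using h2
  obtain ⟨m, hm⟩ : ∃ m, Nat.card (MulAction.orbit H (g : G ⧸ H)) = m := ⟨_, rfl⟩
  have hm' := (card_orbit_inv H g).trans hm
  obtain ⟨k, hk⟩ : ∃ k, Nat.card H = m * k := by
    have h1 := card_orbit_mul_card_stabilizer H (g : G ⧸ H)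
    rw [hm] at h1
    exact ⟨_, h1.symm⟩
  have hm3 : 3 ≤ m := by
    have hmo : Odd m := by
      refine hodd.of_dvd_nat ((Dvd.intro k hk.symm).trans (Subgroup.card_subgroup_dvd_card H))
    have hm1 : m ≠ 1 := by
      intro h
      rw [h, Nat.card_eq_one_iff_unique] at hm
      have := hm.1
      have := Subsingleton.elim (⟨_, MulAction.mem_orbit _ h₀⟩ : MulAction.orbit H (g : G ⧸ H))
        ⟨_, MulAction.mem_orbit_self _⟩
      exact hg (congrArg Subtype.val this)
    obtain ⟨t, ht⟩ := hmo
    omega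
  -- `gH` and `g⁻¹H` in one orbit would give `(g h) ^ 2 ∈ H`, hence `g ∈ H` as `|G|` is odd
  have hdisj : ∀ q, q ∈ MulAction.orbit H (g : G ⧸ H) →
      q ∉ MulAction.orbit H ((g⁻¹ : G) : G ⧸ H) := by
    intro q hq1 hq2
    have hq : ((g⁻¹ : G) : G ⧸ H) ∈ MulAction.orbit H (g : G ⧸ H) := by
      rw [← MulAction.orbit_eq_iff] at hq1 hq2 ⊢
      rw [← hq1, ← hq2]
    obtain ⟨h, hh⟩ := hq
    have hh' : ((h * g : G) : G ⧸ H) = ((g⁻¹ : G) : G ⧸ H) := hh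
    have h1 := QuotientGroup.eq.1 hh'.symm
    rw [inv_inv] at h1
    have h2 : (g * h) ^ 2 ∈ H := by
      have : (g * (h : G)) ^ 2 = g * (h * g) * h := by rw [pow_two]; group
      rw [this]
      exact mul_mem h1 h.2
    have h3 : g * (h : G) ∈ H := by
      obtain ⟨t, ht⟩ := hodd
      have : g * (h : G) = ((g * h) ^ 2) ^ (t + 1) := by
        rw [← pow_mul, show 2 * (t + 1) = Nat.card G + 1 by omega, pow_succ, pow_card_eq_one',
          one_mul]
      rw [this]
      exact pow_mem h2 _
    have h4 : g ∈ H := (Subgroup.mul_mem_cancel_right H h.2).1 h3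
    apply hg
    change ((h₀ * g : G) : G ⧸ H) = _
    rw [QuotientGroup.eq]
    exact mul_mem (inv_mem (mul_mem h₀.2 h4)) h4
  obtain ⟨A, hA⟩ : ∃ A, A = MulAction.orbit H (g : G ⧸ H) := ⟨_, rfl⟩
  obtain ⟨B, hB⟩ : ∃ B, B = MulAction.orbit H ((g⁻¹ : G) : G ⧸ H) := ⟨_, rfl⟩
  have hcA := card_choice_orbit_le H g m k hm hk
  have hcB := card_choice_orbit_le H g⁻¹ m k hm' hk
  rw [← hA] at hcA hm
  rw [← hB] at hcB hm'
  rw [← hA, ← hB] at hdisj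
  have hcount : numDT H H ≤ (m.factorial * k ^ m) * ((m.factorial * k ^ m) *
      Nat.card H ^ Nat.card ↥((A ∪ B)ᶜ)) := by
    refine (numDT_le_s18 H).trans ?_
    refine le_trans ?_ (Nat.mul_le_mul hcA (Nat.mul_le_mul_right _ hcB))
    rw [← Nat.card_fun, ← Nat.card_prod, ← Nat.card_prod]
    refine Nat.card_le_card_of_injective (fun h =>
      (⟨fun q => h.1 q.1, fun q q' e => Subtype.ext (h.2 e)⟩,
        ⟨fun q => h.1 q.1, fun q q' e => Subtype.ext (h.2 e)⟩, fun q => h.1 q.1)) ?_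
    intro h h' e
    simp only [Prod.mk.injEq] at e
    obtain ⟨e1, e2, e3⟩ := e
    apply Subtype.ext
    funext q
    by_cases hqA : q ∈ A
    · exact congrFun (Subtype.mk.inj e1) ⟨q, hqA⟩
    by_cases hqB : q ∈ B
    · exact congrFun (Subtype.mk.inj e2) ⟨q, hqB⟩
    · exact congrFun e3 ⟨q, by simp [hqA, hqB]⟩
  have hidx : H.index = m + m + Nat.card ↥((A ∪ B)ᶜ) := by
    rw [Subgroup.index, ← Set.ncard_add_ncard_compl (A ∪ B),
      Set.ncard_union_eq (Set.disjoint_left.2 hdisj), ← Nat.card_coe_set_eq, ← Nat.card_coe_set_eq,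
      ← Nat.card_coe_set_eq, hm, hm']
  have hfinal : 81 * numDT H H ≤ 4 * Nat.card H ^ H.index := by
    have h9 := nine_mul_factorial_le hm3
    rw [hidx, pow_add, pow_add]
    have hpow : Nat.card H ^ m = m ^ m * k ^ m := by rw [hk, mul_pow]
    rw [hpow]
    generalize Nat.card H ^ Nat.card ↥((A ∪ B)ᶜ) = r at *
    calc 81 * numDT H H ≤ 81 * ((m.factorial * k ^ m) * ((m.factorial * k ^ m) * r)) :=
          Nat.mul_le_mul_left _ hcount
      _ = (9 * m.factorial) * (9 * m.factorial) * (k ^ m * k ^ m * r) := by ring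
      _ ≤ (2 * m ^ m) * (2 * m ^ m) * (k ^ m * k ^ m * r) := by gcongr
      _ = 4 * (m ^ m * k ^ m * (m ^ m * k ^ m) * r) := by ring
  have hpos : (0 : ℚ) < (Nat.card H : ℚ) ^ H.index := by
    have : 0 < Nat.card H := Nat.card_pos
    positivity
  have hQ : (81 : ℚ) * numDT H H ≤ 4 * (Nat.card H : ℚ) ^ H.index := by exact_mod_cast hfinal
  rw [transProb, div_le_iff₀ hpos]
  linarith

theorem stmt18 (G : Type*) [Group G] [Finite G] (hodd : Odd (Nat.card G))
    (hna : ¬ ∀ a b : G, a * b = b * a) :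
    tp G ≤ (4 / 81 : ℚ) := by
  obtain ⟨H, hH⟩ : ∃ H : Subgroup G, ¬ H.Normal := by
    by_contra! hN
    exact hna fun a b => commute_of_forall_normal hodd hN a b
  refine le_trans ?_ (transProb_le_of_not_normal hodd H hH)
  unfold tp
  exact Finset.inf'_le (fun H : Subgroup G => transProb H H) (@Finset.mem_univ _ (_) H)
end
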